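/- Fix finite nonempty sets SP₀, SQ₀, SP₁, SQ₁ ⊂ ℕ with 0 ∈ SP₀ ∪ SQ₀, 0 ∈ SP₁ ∪ SQ₁, gcd of the nonzero elements of SP₀ ∪ SQ₀ ∪ SP₁ ∪ SQ₁ equal to 1, a₀n = max(SP₀ ∪ SQ₀) ≥ 1, a₁m = max(SP₁ ∪ SQ₁) ≥ 1, and suppose SQ₀ ⊄ SP₀ and SQ₁ ⊄ SP₁. Define E = [0 ∈ SQ₁ \ SP₁]·(min SP₀) + [a₁m ∈ SQ₁ \ SP₁]·(a₀n − max SP₀), E' = [0 ∈ SQ₀ \ SP₀]·(min SP₁) + [a₀n ∈ SQ₀ \ SP₀]·(a₁m − max SP₁), and δ = (a₀n − max SP₀)·(min SP₁) − (min SP₀)·(a₁m − max SP₁), and assume E ≠ 0. Then: (a) either (0 ∈ SQ₀ \ SP₀ and 0 ∈ SQ₁ \ SP₁) or (a₀n ∈ SQ₀ \ SP₀ and a₁m ∈ SQ₁ \ SP₁), and E' ≠ 0; (b) for generic coefficients, for every irreducible φ ∈ ℂ[x,y] with φ(P₀/Q₀, P₁/Q₁) = 0 in ℂ(t): the points (0,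 E) and (E', 0) are vertices of the Newton polygon N(φ); if it is not the case that all four conditions 0 ∈ SQ₀ \ SP₀, 0 ∈ SQ₁ \ SP₁, a₀n ∈ SQ₀ \ SP₀, a₁m ∈ SQ₁ \ SP₁ hold with δ ≠ 0, then the segment joining (0, E) and (E', 0) is contained in the boundary of N(φ) (it is an edge of N(φ)); otherwise the point p, defined as p = (min SP₁, a₀n − max SP₀) if δ < 0 and p = (a₁m − max SP₁, min SP₀) if δ > 0, is a vertex of N(φ) and the two segments joining (0, E) to p and p to (E', 0) are contained in the boundary of N(φ). -/

import Mathlib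

open Polynomial

/-- The univariate polynomial with support `S` and coefficient vector `c`. -/
noncomputable def polyOfCoeffs (S : Finset ℕ) (c : {s // s ∈ S} → ℂ) : Polynomial ℂ :=
  ∑ s ∈ S.attach, Polynomial.C (c s) * Polynomial.X ^ (s : ℕ)

/-- The image of that polynomial in the field of rational functions `ℂ(t)`. -/
noncomputable def ratFuncOf (S : Finset ℕ) (c : {s // s ∈ S} → ℂ) : RatFunc ℂ :=
  algebraMap (Polynomial ℂ) (RatFunc ℂ) (polyOfCoeffs S c)

/-- The Newton polygon of a bivariate polynomial: the convex hull in `ℝ²` of its support. -/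
noncomputable def newtonPolygon (φ : MvPolynomial (Fin 2) ℂ) : Set (ℝ × ℝ) :=
  convexHull ℝ ((fun d : Fin 2 →₀ ℕ => ((d 0 : ℝ), (d 1 : ℝ))) '' ↑φ.support)

/-- `φ(P₀/Q₀, P₁/Q₁) = 0` in `ℂ(t)`, where `P₀, Q₀, P₁, Q₁` have supports
`SS 0, SS 1, SS 2, SS 3` and coefficient vector `c`. -/
def vanishesDiff (SS : Fin 4 → Finset ℕ)
    (c : (Σ i : Fin 4, {s // s ∈ SS i}) → ℂ) (φ : MvPolynomial (Fin 2) ℂ) : Prop :=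
  MvPolynomial.aeval
    ![ratFuncOf (SS 0) (fun s => c ⟨0, s⟩) / ratFuncOf (SS 1) (fun s => c ⟨1, s⟩),
      ratFuncOf (SS 2) (fun s => c ⟨2, s⟩) / ratFuncOf (SS 3) (fun s => c ⟨3, s⟩)] φ = 0

/-!
Let `Φ` be the implicit equation, and choose a valuation on an algebraic closure of `ℂ(x)` that is
trivial on `ℂ` and satisfies `v x < 1`. Generically the parametrization is injective, so the roots
of `Φ(x, y)`, as a polynomial in `y`, are the values `y = P₁(t) / Q₁(t)` at the parameters `t` with
`P₀(t) / Q₀(t) = x`. Since `v x < 1`, such a `t` is close to a zero of `P₀` or to infinity, and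
`v y < 1` is possible only when `t` is close to `0` or to `∞`, because `P₀` and `P₁` have no other
common root. All `t` near `0` have the same valuation, and so have all `t` near `∞`. Each family
thus contributes one slope to the lower left part of the Newton polygon of `Φ`, which is read off
the Gauss norms of `Φ(x, y)` at radii at most `1`.

Coprimality is the nonvanishing of a resultant, so it is generic once it holds for one choice of
coefficients. For injectivity, `u ≠ 1` with `t` and `u * t` mapped to the same point is a common
root of two divided differences. These have no common root for a suitable choice of coefficients,
because the exponents have greatest common divisor `1`.
-/

/-- The Gauss norm `M = max (v fᵢ * r ^ i)` of `f` at radius `r`, together with the smallest index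
`lo` and the largest index `hi` at which the maximum is attained. In terms of the Newton polygon
of `f`, these are the end points of the edge with slope `r`. -/
structure HasGaussNorm {R Γ : Type*} [CommRing R] [LinearOrderedCommGroupWithZero Γ]
    (v : Valuation R Γ) (r : Γ) (f : R[X]) (M : Γ) (lo hi : ℕ) : Prop where
  ne_zero : M ≠ 0
  le : ∀ i, v (f.coeff i) * r ^ i ≤ M
  isLeast : IsLeast {i | v (f.coeff i) * r ^ i = M} lo
  isGreatest : IsGreatest {i | v (f.coeff i) * r ^ i = M} hi

namespace HasGaussNorm

variable {R Γ : Type*} [CommRing R] [LinearOrderedCommGroupWithZero Γ] {v : Valuation R Γ}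
  {r M N : Γ} {f g : R[X]} {lo hi lo' hi' i j : ℕ}

theorem lt_of_lt_lo (hf : HasGaussNorm v r f M lo hi) (hi : i < lo) :
    v (f.coeff i) * r ^ i < M :=
  (hf.le i).lt_of_ne fun h => (hf.isLeast.2 h).not_gt hi

theorem lt_of_hi_lt (hf : HasGaussNorm v r f M lo hi) (hi : hi < i) :
    v (f.coeff i) * r ^ i < M :=
  (hf.le i).lt_of_ne fun h => (hf.isGreatest.2 h).not_gt hi

theorem unique (hf : HasGaussNorm v r f M lo hi) (hf' : HasGaussNorm v r f N lo' hi') :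
    M = N ∧ lo = lo' ∧ hi = hi' := by
  obtain rfl : M = N := le_antisymm (hf.isLeast.1.symm.trans_le (hf'.le _))
    (hf'.isLeast.1.symm.trans_le (hf.le _))
  exact ⟨rfl, hf.isLeast.unique hf'.isLeast, hf.isGreatest.unique hf'.isGreatest⟩

theorem coeff_mul_coeff_lt (hf : HasGaussNorm v r f M lo hi) (hg : HasGaussNorm v r g N lo' hi')
    (h : v (f.coeff i) * r ^ i < M ∨ v (g.coeff j) * r ^ j < N) :
    v (f.coeff i * g.coeff j) * r ^ (i + j) < M * N := by
  rw [map_mul, pow_add, mul_mul_mul_comm]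
  rcases h with h | h
  · exact mul_lt_mul_of_lt_of_le_of_nonneg_of_pos h (hg.le j) zero_le (zero_lt_iff.2 hg.ne_zero)
  · exact mul_lt_mul_of_le_of_lt_of_nonneg_of_pos (hf.le i) h zero_le (zero_lt_iff.2 hf.ne_zero)

theorem coeff_mul_lt (hf : HasGaussNorm v r f M lo hi) (hg : HasGaussNorm v r g N lo' hi')
    (hr : r ≠ 0) {k : ℕ}
    (h : ∀ i j, i + j = k → v (f.coeff i) * r ^ i < M ∨ v (g.coeff j) * r ^ j < N) :
    v ((f * g).coeff k) * r ^ k < M * N := by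
  have hrk : 0 < r ^ k := zero_lt_iff.2 (pow_ne_zero k hr)
  rw [← lt_div_iff₀ hrk, coeff_mul]
  refine v.map_sum_lt (div_ne_zero (mul_ne_zero hf.ne_zero hg.ne_zero) hrk.ne') fun p hp => ?_
  rw [lt_div_iff₀ hrk, ← Finset.HasAntidiagonal.mem_antidiagonal.1 hp]
  exact hf.coeff_mul_coeff_lt hg (h _ _ (Finset.HasAntidiagonal.mem_antidiagonal.1 hp))

theorem coeff_mul_eq (hf : HasGaussNorm v r f M lo hi) (hg : HasGaussNorm v r g N lo' hi')
    (hr : r ≠ 0) (hi : v (f.coeff i) * r ^ i = M) (hj : v (g.coeff j) * r ^ j = N)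
    (h : ∀ i' j', i' + j' = i + j → i' ≠ i →
      v (f.coeff i') * r ^ i' < M ∨ v (g.coeff j') * r ^ j' < N) :
    v ((f * g).coeff (i + j)) * r ^ (i + j) = M * N := by
  have hrk : 0 < r ^ (i + j) := zero_lt_iff.2 (pow_ne_zero _ hr)
  have hterm : v (f.coeff i * g.coeff j) * r ^ (i + j) = M * N := by
    rw [map_mul, pow_add, mul_mul_mul_comm, hi, hj]
  rw [coeff_mul, v.map_sum_eq_of_lt (j := (i, j)) (by simp), hterm]
  simp only [Finset.mem_sdiff, Finset.HasAntidiagonal.mem_antidiagonal, Finset.mem_singleton,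
    and_imp]
  intro p hp hne
  rw [← mul_lt_mul_iff_left₀ hrk, hterm, ← hp]
  refine hf.coeff_mul_coeff_lt hg (h _ _ hp fun hpi => hne (Prod.ext hpi ?_))
  omega

theorem mul (hf : HasGaussNorm v r f M lo hi) (hg : HasGaussNorm v r g N lo' hi') (hr : r ≠ 0) :
    HasGaussNorm v r (f * g) (M * N) (lo + lo') (hi + hi') where
  ne_zero := mul_ne_zero hf.ne_zero hg.ne_zero
  le k := by
    have hrk : 0 < r ^ k := zero_lt_iff.2 (pow_ne_zero k hr)
    rw [← le_div_iff₀ hrk, coeff_mul]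
    refine v.map_sum_le fun p hp => ?_
    rw [le_div_iff₀ hrk, ← Finset.HasAntidiagonal.mem_antidiagonal.1 hp, map_mul, pow_add,
      mul_mul_mul_comm]
    exact mul_le_mul' (hf.le _) (hg.le _)
  isLeast := by
    refine ⟨hf.coeff_mul_eq hg hr hf.isLeast.1 hg.isLeast.1 fun i j hij hne => ?_, fun k hk => ?_⟩
    · rcases hne.lt_or_gt with h | h
      · exact .inl (hf.lt_of_lt_lo h)
      · exact .inr (hg.lt_of_lt_lo (by omega))
    · by_contra! hlt
      refine (hf.coeff_mul_lt hg hr fun i j hij => ?_).ne hk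
      rcases lt_or_ge i lo with h | h
      · exact .inl (hf.lt_of_lt_lo h)
      · exact .inr (hg.lt_of_lt_lo (by omega))
  isGreatest := by
    refine ⟨hf.coeff_mul_eq hg hr hf.isGreatest.1 hg.isGreatest.1 fun i j hij hne => ?_,
      fun k hk => ?_⟩
    · rcases hne.lt_or_gt with h | h
      · exact .inr (hg.lt_of_hi_lt (by omega))
      · exact .inl (hf.lt_of_hi_lt h)
    · by_contra! hlt
      refine (hf.coeff_mul_lt hg hr fun i j hij => ?_).ne hk
      rcases lt_or_ge hi i with h | h
      · exact .inl (hf.lt_of_hi_lt h)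
      · exact .inr (hg.lt_of_hi_lt (by omega))

theorem const {c : R} (hc : v c ≠ 0) : HasGaussNorm v r (C c) (v c) 0 0 := by
  have hlt (i : ℕ) (hi : i ≠ 0) : v ((C c).coeff i) * r ^ i < v c := by
    simpa [coeff_C, hi, zero_lt_iff] using hc
  have h0 : v ((C c).coeff 0) * r ^ 0 = v c := by simp
  refine ⟨hc, fun i => ?_, ⟨h0, fun i _ => i.zero_le⟩, ⟨h0, fun i hi => ?_⟩⟩
  · rcases eq_or_ne i 0 with rfl | h
    · exact h0.le
    · exact (hlt i h).le
  · by_contra! h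
    exact (hlt i (by omega)).ne hi

theorem X_sub_C [Nontrivial R] (hr : r ≠ 0) (y : R) :
    HasGaussNorm v r (X - C y) (max r (v y)) (if v y < r then 1 else 0)
      (if v y ≤ r then 1 else 0) := by
  have h0 : v ((X - C y).coeff 0) * r ^ 0 = v y := by simp
  have h1 : v ((X - C y).coeff 1) * r ^ 1 = r := by simp [coeff_X]
  have h2 (i : ℕ) (hi : 1 < i) : v ((X - C y).coeff i) * r ^ i = 0 := by
    rw [coeff_eq_zero_of_natDegree_lt (by rwa [natDegree_X_sub_C]), map_zero, zero_mul]
  have hM : max r (v y) ≠ 0 := (lt_max_of_lt_left (zero_lt_iff.2 hr)).ne'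
  have hattain (i : ℕ) :
      v ((X - C y).coeff i) * r ^ i = max r (v y) ↔ i = 0 ∧ r ≤ v y ∨ i = 1 ∧ v y ≤ r := by
    rcases i with _ | _ | i
    · simp
    · simp
    · rw [h2 _ (by omega)]
      simp [hM.symm]
  refine ⟨hM, fun i => ?_, ?_, ?_⟩
  · rcases i with _ | _ | i
    · exact h0.trans_le (le_max_right _ _)
    · exact h1.trans_le (le_max_left _ _)
    · exact (h2 _ (by omega)).trans_le zero_le
  · simp only [hattain]
    refine ⟨?_, fun i hi => ?_⟩ <;> grind
  · simp only [hattain]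
    refine ⟨?_, fun i hi => ?_⟩ <;> grind

theorem multiset_prod_X_sub_C [Nontrivial R] (hr : r ≠ 0) (s : Multiset R) :
    HasGaussNorm v r (s.map fun y => X - C y).prod (s.map fun y => max r (v y)).prod
      (s.countP fun y => v y < r) (s.countP fun y => v y ≤ r) := by
  induction s using Multiset.induction_on with
  | empty => simpa using const (v := v) (r := r) (c := 1) (by simp)
  | cons y s ih =>
    simpa only [Multiset.map_cons, Multiset.prod_cons, Multiset.countP_cons, add_comm]
      using (X_sub_C hr y).mul ih hr

end HasGaussNorm

section TrivialOnConstants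

variable {K F Γ : Type*} [Field K] [Field F] [Algebra K F] [LinearOrderedCommGroupWithZero Γ]
  (v : Valuation F Γ) [v.IsTrivialOn K]

theorem valuation_algebraMap_le_one (c : K) : v (algebraMap K F c) ≤ 1 := by
  rcases eq_or_ne c 0 with rfl | hc
  · simp
  · exact (Valuation.IsTrivialOn.eq_one c hc).le

variable {v} {t : F} {P Q : K[X]}

theorem valuation_aeval_le_one (ht : v t ≤ 1) (P : K[X]) : v (aeval t P) ≤ 1 := by
  rw [aeval_eq_sum_range]
  refine v.map_sum_le fun i _ => ?_
  rw [Algebra.smul_def, map_mul, map_pow]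
  exact mul_le_one' (valuation_algebraMap_le_one v _) (pow_le_one' ht i)

theorem valuation_aeval_eq_pow_natTrailingDegree (ht₀ : t ≠ 0) (ht : v t < 1) (hP : P ≠ 0) :
    v (aeval t P) = v t ^ P.natTrailingDegree := by
  have hpos : 0 < v t := zero_lt_iff.2 (v.ne_zero_iff.2 ht₀)
  have hlead : v (P.trailingCoeff • t ^ P.natTrailingDegree) = v t ^ P.natTrailingDegree := by
    rw [Algebra.smul_def, map_mul, map_pow,
      Valuation.IsTrivialOn.eq_one _ (trailingCoeff_nonzero_iff_nonzero.2 hP), one_mul]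
  rw [aeval_eq_sum_range, ← hlead, trailingCoeff]
  refine v.map_sum_eq_of_lt
    (Finset.mem_range_succ_iff.2 (natTrailingDegree_le_natDegree P)) fun i hi => ?_
  rw [← trailingCoeff, hlead, Algebra.smul_def, map_mul, map_pow]
  have hne : i ≠ P.natTrailingDegree := by simpa using (Finset.mem_sdiff.1 hi).2
  rcases hne.lt_or_gt with h | h
  · simpa [coeff_eq_zero_of_lt_natTrailingDegree h] using pow_pos hpos _
  · exact (mul_le_of_le_one_left' (valuation_algebraMap_le_one v _)).trans_lt
      (pow_lt_pow_right_of_lt_one₀ hpos ht h)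

theorem pow_le_valuation_aeval (ht₀ : t ≠ 0) (ht : v t < 1) {i : ℕ} (hP : P.coeff i ≠ 0) :
    v t ^ i ≤ v (aeval t P) := by
  rw [valuation_aeval_eq_pow_natTrailingDegree ht₀ ht (by rintro rfl; simp at hP)]
  exact pow_le_pow_right_of_le_one' ht.le (natTrailingDegree_le_of_ne_zero hP)

theorem coeff_ne_zero_of_valuation_aeval_eq_pow (ht₀ : t ≠ 0) (ht : v t < 1) {i : ℕ}
    (h : v (aeval t P) = v t ^ i) : P.coeff i ≠ 0 := by
  have hpos : 0 < v t := zero_lt_iff.2 (v.ne_zero_iff.2 ht₀)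
  have hP : P ≠ 0 := by
    rintro rfl
    exact (pow_pos hpos i).ne (by simpa using h)
  rw [valuation_aeval_eq_pow_natTrailingDegree ht₀ ht hP] at h
  rw [← (pow_right_strictAnti₀ hpos ht).injective h]
  exact coeff_natTrailingDegree_ne_zero.2 hP

theorem min_one_valuation_div_of_lt_one (ht₀ : t ≠ 0) (ht : v t < 1)
    (hP : P ≠ 0) (hQ : Q ≠ 0)
    (h : P.natTrailingDegree = 0 ∨ Q.natTrailingDegree = 0) :
    min 1 (v (aeval t P / aeval t Q)) = v t ^ P.natTrailingDegree := by
  have hpos : 0 < v t := zero_lt_iff.2 (v.ne_zero_iff.2 ht₀)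
  rw [map_div₀, valuation_aeval_eq_pow_natTrailingDegree ht₀ ht hP,
    valuation_aeval_eq_pow_natTrailingDegree ht₀ ht hQ]
  rcases h with h | h
  · rw [h, pow_zero, one_div]
    exact min_eq_left ((one_le_inv₀ (pow_pos hpos _)).2 (pow_le_one' ht.le _))
  · rw [h, pow_zero, div_one]
    exact min_eq_right (pow_le_one' ht.le _)

theorem min_one_valuation_div_of_one_lt (ht : 1 < v t) (hP : P ≠ 0) (hQ : Q ≠ 0) :
    min 1 (v (aeval t P / aeval t Q)) =
      (v t)⁻¹ ^ (max P.natDegree Q.natDegree - P.natDegree) := by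
  have hpos : 0 < v t := zero_lt_one.trans ht
  rw [map_div₀, valuation_aeval_eq_valuation_X_pow_natDegree_of_one_lt_valuation_X t ht hP,
    valuation_aeval_eq_valuation_X_pow_natDegree_of_one_lt_valuation_X t ht hQ]
  rcases le_total Q.natDegree P.natDegree with h | h
  · rw [max_eq_left h, Nat.sub_self, pow_zero]
    exact min_eq_left ((one_le_div₀ (pow_pos hpos _)).2 (pow_le_pow_right₀ ht.le h))
  · rw [max_eq_right h, inv_pow, pow_sub₀ _ hpos.ne' h, mul_inv, inv_inv, mul_comm,
      ← div_eq_mul_inv]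
    exact min_eq_right ((div_le_one₀ (pow_pos hpos _)).2 (pow_le_pow_right₀ ht.le h))

theorem one_le_valuation_div_of_eq_one {P₀ P₁ Q₁ : K[X]} {k : ℕ}
    (hk : X ^ k ∈ Ideal.span {P₀, P₁}) (ht : v t = 1) (hP₀ : v (aeval t P₀) < 1)
    (hQ₁ : aeval t Q₁ ≠ 0) : 1 ≤ v (aeval t P₁ / aeval t Q₁) := by
  obtain ⟨p, q, hpq⟩ := Ideal.mem_span_pair.1 hk
  have hp : v (aeval t p) * v (aeval t P₀) < 1 :=
    (mul_le_of_le_one_left' (valuation_aeval_le_one ht.le p)).trans_lt hP₀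
  have hq : v (aeval t (q * P₁)) = 1 := by
    rw [eq_sub_of_add_eq' hpq, map_sub, v.map_sub_eq_of_lt_left] <;> simp [ht, hp]
  rw [map_div₀, one_le_div₀ (zero_lt_iff.2 (v.ne_zero_iff.2 hQ₁))]
  refine (valuation_aeval_le_one ht.le Q₁).trans (hq.symm.trans_le ?_)
  rw [map_mul, map_mul]
  exact mul_le_of_le_one_left' (valuation_aeval_le_one ht.le q)

theorem exists_valuationSubring_lt_one {x : F} (hx : Transcendental K x) :
    ∃ B : ValuationSubring F, B.valuation.IsTrivialOn K ∧ B.valuation x < 1 := by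
  let A : Subring F := (aeval (R := K) x).toRingHom.range
  have hxA : x ∈ A := ⟨X, by simp⟩
  have hproper : Ideal.span {(⟨x, hxA⟩ : A)} ≠ ⊤ := by
    rw [Ne, Ideal.span_singleton_eq_top]
    intro hunit
    obtain ⟨⟨_, p, rfl⟩, hp⟩ := hunit.exists_right_inv
    have hXp : X * p = 1 :=
      transcendental_iff_injective.1 hx (by simpa using congrArg Subtype.val hp)
    exact not_isUnit_X (.of_mul_eq_one p hXp)
  obtain ⟨B, hAB, hB⟩ := Ideal.image_subset_nonunits_valuationSubring _ hproper
  have hle (c : K) : B.valuation (algebraMap K F c) ≤ 1 :=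
    (B.valuation_le_one_iff _).2 (hAB ⟨C c, by simp⟩)
  refine ⟨B, ⟨fun c hc => (hle c).antisymm ?_⟩, hB ⟨⟨x, hxA⟩, Ideal.subset_span rfl, rfl⟩⟩
  have hne : B.valuation (algebraMap K F c) ≠ 0 := by simp [hc]
  simpa [inv_le_one₀ (zero_lt_iff.2 hne)] using hle c⁻¹

end TrivialOnConstants

section NewtonPolygon

variable {F Γ : Type*} [Field F] [LinearOrderedCommGroupWithZero Γ] {v : Valuation F Γ}

theorem HasGaussNorm.of_le_one {f : F[X]} {ψ : F} {s : Multiset F}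
    (hf : f = C ψ * (s.map fun y => X - C y).prod) (hle : ∀ i, v (f.coeff i) ≤ 1) {i₀ : ℕ}
    (hi₀ : v (f.coeff i₀) = 1) {r : Γ} (hr : r ≠ 0) (hr1 : r ≤ 1) :
    ∃ hi, HasGaussNorm v r f ((s.map fun y => min 1 (v y)).map (max r)).prod
      ((s.map fun y => min 1 (v y)).countP (· < r)) hi := by
  have hψ : v ψ ≠ 0 := by
    rintro hψ
    simp [hf, v.zero_iff.1 hψ] at hi₀
  have key {r : Γ} (hr : r ≠ 0) :
      HasGaussNorm v r f (v ψ * (s.map fun y => max r (v y)).prod)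
        (s.countP fun y => v y < r) (s.countP fun y => v y ≤ r) := by
    simpa only [hf, zero_add] using (const hψ).mul (multiset_prod_X_sub_C hr s) hr
  have hnorm : v ψ * (s.map fun y => max 1 (v y)).prod = 1 :=
    le_antisymm (by simpa using (key one_ne_zero).isLeast.1.symm.trans_le (by simpa using hle _))
      (by simpa [hi₀] using (key one_ne_zero).le i₀)
  have htrunc (y : F) : max r (v y) = max r (min 1 (v y)) * max 1 (v y) := by
    rcases le_total 1 (v y) with hy | hy
    · simp [hy, hr1, hr1.trans hy]
    · simp [hy]
  refine ⟨s.countP fun y => v y ≤ r, ?_⟩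
  convert key hr using 1
  · simp only [htrunc, Multiset.prod_map_mul, Multiset.map_map, Function.comp_def]
    rw [mul_left_comm, hnorm, mul_one]
  · rw [Multiset.countP_map, ← Multiset.countP_eq_card_filter]
    refine Multiset.countP_congr rfl fun y _ => ?_
    simp [hr1.not_gt]

theorem countP_lt_replicate (n : ℕ) (r ρ : Γ) :
    (Multiset.replicate n r).countP (· < ρ) = if r < ρ then n else 0 := by
  rw [← Multiset.coe_replicate, Multiset.coe_countP, List.countP_replicate]
  simp

theorem hasGaussNorm_of_replicate {f : F[X]} {ψ : F} {s : Multiset F}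
    (hf : f = C ψ * (s.map fun y => X - C y).prod) (hle : ∀ i, v (f.coeff i) ≤ 1) {i₀ : ℕ}
    (hi₀ : v (f.coeff i₀) = 1) {r r' : Γ} {n n' k : ℕ}
    (hs : s.map (fun y => min 1 (v y)) =
      Multiset.replicate n r + Multiset.replicate n' r' + Multiset.replicate k 1)
    (hr₀ : r ≠ 0) (hr₀' : r' ≠ 0) (hrr' : r' ≤ r) (hr : r < 1) :
    (∃ hi, HasGaussNorm v 1 f 1 (n + n') hi) ∧
    (∃ hi, HasGaussNorm v r f (r ^ (n + n')) (if r' < r then n' else 0) hi) ∧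
    ∃ hi, HasGaussNorm v r' f (r ^ n * r' ^ n') 0 hi := by
  have hr' : r' < 1 := hrr'.trans_lt hr
  have hnorm {ρ : Γ} (hρ : ρ ≠ 0) (hρ1 : ρ ≤ 1) := HasGaussNorm.of_le_one hf hle hi₀ hρ hρ1
  simp only [hs] at hnorm
  refine ⟨?_, ?_, ?_⟩
  · simpa [hr.le, hr, hr'.le, hr', countP_lt_replicate] using hnorm one_ne_zero le_rfl
  · simpa [hr.le, hrr', countP_lt_replicate, hr.le.not_gt, pow_add] using hnorm hr₀ hr.le
  · simpa [hr'.le, hrr', countP_lt_replicate, hr'.le.not_gt, hrr'.not_gt] using hnorm hr₀' hr'.le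

/-- The exponents `(i, j)` of the monomials `x ^ i * y ^ j` of `Φ ∈ K[x][y]`. -/
def exponents {K : Type*} [Semiring K] (Φ : K[X][X]) : Set (ℕ × ℕ) :=
  {p | (Φ.coeff p.2).coeff p.1 ≠ 0}

/-- The lower left boundary of the Newton polygon with exponent set `A` is the path
`(0, n + n')`, `(m, n')`, `(m + m', 0)`, whose two edges may be parallel or degenerate. -/
structure LowerLeftCorner (A : Set (ℕ × ℕ)) (m n m' n' : ℕ) : Prop where
  convex : n' * m ≤ n * m'
  top : IsLeast {j | (0, j) ∈ A} (n + n')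
  right : IsLeast {i | (i, 0) ∈ A} (m + m')
  upper : ∀ p ∈ A, m * (n + n') ≤ n * p.1 + m * p.2
  lower : ∀ p ∈ A, n' * (m + m') ≤ n' * p.1 + m' * p.2
  corner : n' * m < n * m' → (m, n') ∈ A

section Radii

variable {ξ r r' : Γ} {m n m' n' : ℕ}

theorem le_of_pow_mul_pow_le (hξ₀ : 0 < ξ) (hξ : ξ < 1) (hr : r ^ n = ξ ^ m) {a b i j : ℕ}
    (h : ξ ^ i * r ^ j ≤ ξ ^ a * r ^ b) : n * a + m * b ≤ n * i + m * j := by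
  have hpow (i j : ℕ) : (ξ ^ i * r ^ j) ^ n = ξ ^ (n * i + m * j) := by
    rw [mul_pow, pow_right_comm r, hr, ← pow_mul, ← pow_mul, mul_comm i, pow_add]
  rw [← pow_le_pow_iff_right_of_lt_one₀ hξ₀ hξ, ← hpow, ← hpow]
  exact pow_le_pow_left₀ zero_le h n

theorem mul_eq_mul_of_pow_eq (hξ₀ : 0 < ξ) (hξ : ξ < 1) (hr : r ^ n = ξ ^ m)
    (hr' : r ^ n' = ξ ^ m') : n' * m = n * m' := by
  refine (pow_right_strictAnti₀ hξ₀ hξ).injective ?_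
  rw [mul_comm, pow_mul, ← hr, mul_comm n, pow_mul, ← hr', pow_right_comm]

theorem mul_le_mul_of_pow_eq (hξ₀ : 0 < ξ) (hξ : ξ < 1) (hr : r ^ n = ξ ^ m)
    (hr' : r' ^ n' = ξ ^ m') (h : r' ≤ r) : n' * m ≤ n * m' := by
  rw [← pow_le_pow_iff_right_of_lt_one₀ hξ₀ hξ, mul_comm, pow_mul _ m', ← hr', mul_comm n',
    pow_mul, ← hr, pow_right_comm]
  exact pow_le_pow_left₀ zero_le (pow_le_pow_left₀ zero_le h _) _

end Radii

section Coefficients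

variable {K : Type*} [Field K] [Algebra K F] [v.IsTrivialOn K] {x : F} {Φ : K[X][X]} {i j : ℕ}

theorem valuation_coeff_map_aeval_le_one (hx : v x ≤ 1) (Φ : K[X][X]) (j : ℕ) :
    v ((Φ.map (aeval x).toRingHom).coeff j) ≤ 1 := by
  rw [coeff_map]
  exact valuation_aeval_le_one hx _

theorem pow_le_valuation_coeff_map_aeval (hx₀ : x ≠ 0) (hx : v x < 1)
    (h : (i, j) ∈ exponents Φ) : v x ^ i ≤ v ((Φ.map (aeval x).toRingHom).coeff j) := by
  rw [coeff_map]
  exact pow_le_valuation_aeval hx₀ hx h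

theorem mem_exponents_of_valuation_eq_pow (hx₀ : x ≠ 0) (hx : v x < 1)
    (h : v ((Φ.map (aeval x).toRingHom).coeff j) = v x ^ i) : (i, j) ∈ exponents Φ := by
  rw [coeff_map] at h
  exact coeff_ne_zero_of_valuation_aeval_eq_pow hx₀ hx h

theorem HasGaussNorm.pow_mul_pow_le {r M : Γ} {lo hi : ℕ} (hx₀ : x ≠ 0) (hx : v x < 1)
    (h : HasGaussNorm v r (Φ.map (aeval x).toRingHom) M lo hi) (hij : (i, j) ∈ exponents Φ) :
    v x ^ i * r ^ j ≤ M :=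
  (mul_le_mul_left (pow_le_valuation_coeff_map_aeval hx₀ hx hij) _).trans (h.le j)

end Coefficients

theorem lowerLeftCorner_exponents_of_replicate {K : Type*} [Field K] [Algebra K F]
    [v.IsTrivialOn K] {x : F} (hx₀ : x ≠ 0) (hx : v x < 1) {Φ : K[X][X]} {j₀ : ℕ}
    (hj₀ : (0, j₀) ∈ exponents Φ) {ψ : F} {s : Multiset F}
    (hΦ : Φ.map (aeval x).toRingHom = C ψ * (s.map fun y => X - C y).prod)
    {r r' : Γ} {m n m' n' k : ℕ}
    (hs : s.map (fun y => min 1 (v y)) =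
      Multiset.replicate n r + Multiset.replicate n' r' + Multiset.replicate k 1)
    (hr₀ : r ≠ 0) (hr₀' : r' ≠ 0) (hrr' : r' ≤ r) (hr1 : r < 1)
    (hr : r ^ n = v x ^ m) (hr' : r' ^ n' = v x ^ m') :
    LowerLeftCorner (exponents Φ) m n m' n' := by
  have hξ₀ : 0 < v x := zero_lt_iff.2 (v.ne_zero_iff.2 hx₀)
  have hle := valuation_coeff_map_aeval_le_one (Φ := Φ) hx.le
  have hone : v ((Φ.map (aeval x).toRingHom).coeff j₀) = 1 :=
    (hle j₀).antisymm (by simpa using pow_le_valuation_coeff_map_aeval hx₀ hx hj₀)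
  obtain ⟨⟨_, h1⟩, ⟨_, h⟩, _, h'⟩ := hasGaussNorm_of_replicate hΦ hle hone hs hr₀ hr₀' hrr' hr1
  have hzero : v ((Φ.map (aeval x).toRingHom).coeff 0) = v x ^ (m + m') := by
    rw [pow_add, ← hr, ← hr']
    simpa using h'.isLeast.1
  have hmem {i j : ℕ} := mem_exponents_of_valuation_eq_pow (Φ := Φ) (i := i) (j := j) hx₀ hx
  refine ⟨mul_le_mul_of_pow_eq hξ₀ hx hr hr' hrr', ⟨hmem (by simpa using h1.isLeast.1), ?_⟩,
    ⟨hmem hzero, ?_⟩, ?_, ?_, fun hlt => hmem ?_⟩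
  · intro j hj
    by_contra! hlt
    exact (h1.lt_of_lt_lo hlt).not_ge (by simpa using pow_le_valuation_coeff_map_aeval hx₀ hx hj)
  · intro i hi
    rw [← pow_le_pow_iff_right_of_lt_one₀ hξ₀ hx, ← hzero]
    exact pow_le_valuation_coeff_map_aeval hx₀ hx hi
  · rintro ⟨i, j⟩ hij
    simpa using le_of_pow_mul_pow_le hξ₀ hx hr (a := 0) (b := n + n')
      (by simpa using h.pow_mul_pow_le hx₀ hx hij)
  · rintro ⟨i, j⟩ hij
    refine le_of_pow_mul_pow_le hξ₀ hx hr' (a := m + m') (b := 0) ?_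
    rw [pow_add, ← hr, ← hr', pow_zero, mul_one]
    exact h'.pow_mul_pow_le hx₀ hx hij
  · have hlt' : r' < r := hrr'.lt_of_ne fun heq =>
      hlt.ne (mul_eq_mul_of_pow_eq hξ₀ hx hr (heq ▸ hr'))
    have hatt := h.isLeast.1
    rw [if_pos hlt', pow_add] at hatt
    rw [← hr]
    exact mul_right_cancel₀ (pow_ne_zero _ hr₀) hatt

end NewtonPolygon

section Fiber

variable {K F Γ : Type*} [Field K] [Field F] [Algebra K F] [LinearOrderedCommGroupWithZero Γ]
  {v : Valuation F Γ} {P Q P₁ Q₁ : K[X]} {x t : F}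

/-- The polynomial `P - x * Q`, whose roots are the parameters `t` with `P(t) / Q(t) = x` when `P`
and `Q` are coprime. -/
noncomputable def fiberPoly (P Q : K[X]) (x : F) : F[X] :=
  P.map (algebraMap K F) - C x * Q.map (algebraMap K F)

theorem map_fiberPoly {L : Type*} [Field L] [Algebra K L] [Algebra L F] [IsScalarTower K L F]
    (P Q : K[X]) (x : L) :
    (fiberPoly P Q x).map (algebraMap L F) = fiberPoly P Q (algebraMap L F x) := by
  simp [fiberPoly, Polynomial.map_map, ← IsScalarTower.algebraMap_eq]

theorem coeff_fiberPoly (P Q : K[X]) (x : F) (i : ℕ) :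
    (fiberPoly P Q x).coeff i = algebraMap K F (P.coeff i) - x * algebraMap K F (Q.coeff i) := by
  simp [fiberPoly]

theorem eval_fiberPoly (P Q : K[X]) (x t : F) :
    (fiberPoly P Q x).eval t = aeval t P - x * aeval t Q := by
  simp [fiberPoly, aeval_def, eval_map]

theorem coeff_fiberPoly_eq_zero (hx : Transcendental K x) {i : ℕ} :
    (fiberPoly P Q x).coeff i = 0 ↔ P.coeff i = 0 ∧ Q.coeff i = 0 := by
  have h := transcendental_iff.1 hx (C (P.coeff i) - X * C (Q.coeff i))
  rw [coeff_fiberPoly]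
  refine ⟨fun h0 => ?_, fun h0 => by simp [h0]⟩
  have hp := h (by simpa [mul_comm x] using h0)
  exact ⟨by simpa using congrArg (coeff · 0) hp, by simpa [coeff_C] using congrArg (coeff · 1) hp⟩

theorem natDegree_fiberPoly (hx : Transcendental K x) :
    (fiberPoly P Q x).natDegree = max P.natDegree Q.natDegree := by
  refine eq_of_forall_ge_iff fun n => ?_
  simp only [max_le_iff, natDegree_le_iff_coeff_eq_zero, coeff_fiberPoly_eq_zero hx]
  grind

theorem fiberPoly_ne_zero (hx : Transcendental K x) (hP : P ≠ 0) : fiberPoly P Q x ≠ 0 := by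
  contrapose! hP
  ext i
  exact ((coeff_fiberPoly_eq_zero hx).1 (by rw [hP, coeff_zero])).1

theorem eq_div_of_isRoot_fiberPoly (h : IsCoprime P Q) (ht : (fiberPoly P Q x).IsRoot t) :
    aeval t Q ≠ 0 ∧ x = aeval t P / aeval t Q := by
  rw [IsRoot, eval_fiberPoly, sub_eq_zero] at ht
  have hQ : aeval t Q ≠ 0 := fun h0 => by
    obtain ⟨p, q, hpq⟩ := h
    simpa [ht, h0] using congrArg (aeval t) hpq
  exact ⟨hQ, by rw [ht, mul_div_cancel_right₀ _ hQ]⟩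

theorem transcendental_of_isRoot_fiberPoly (hx : Transcendental K x) (h : IsCoprime P Q)
    (ht : (fiberPoly P Q x).IsRoot t) : Transcendental K t := fun halg => by
  rw [(eq_div_of_isRoot_fiberPoly h ht).2] at hx
  have hP (P : K[X]) : IsAlgebraic K (aeval t P) := by
    by_contra h
    exact (transcendental_aeval_iff.1 h).1 halg
  exact hx (div_eq_mul_inv (aeval t P) _ ▸ (hP P).mul (hP Q).inv)

theorem hasGaussNorm_fiberPoly [v.IsTrivialOn K] (hx : v x < 1) (hP : P ≠ 0) (Q : K[X]) :
    HasGaussNorm v 1 (fiberPoly P Q x) 1 P.natTrailingDegree P.natDegree := by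
  have hlt (i : ℕ) : v (x * algebraMap K F (Q.coeff i)) < 1 := by
    rw [map_mul]
    exact (mul_le_of_le_one_right' (valuation_algebraMap_le_one v _)).trans_lt hx
  have hle (i : ℕ) : v ((fiberPoly P Q x).coeff i) ≤ 1 := by
    rw [coeff_fiberPoly]
    exact v.map_sub_le (valuation_algebraMap_le_one v _) (hlt i).le
  have hattain (i : ℕ) : v ((fiberPoly P Q x).coeff i) * 1 ^ i = 1 ↔ P.coeff i ≠ 0 := by
    rw [one_pow, mul_one, coeff_fiberPoly]
    rcases eq_or_ne (P.coeff i) 0 with h | h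
    · simpa [h] using (hlt i).ne
    · have hone := Valuation.IsTrivialOn.eq_one (v := v) _ h
      simpa [h] using (v.map_sub_eq_of_lt_left ((hlt i).trans_eq hone.symm)).trans hone
  refine ⟨one_ne_zero, by simpa using hle, ?_, ?_⟩ <;> simp only [hattain]
  · exact ⟨coeff_natTrailingDegree_ne_zero.2 hP, fun i hi => natTrailingDegree_le_of_ne_zero hi⟩
  · exact ⟨leadingCoeff_ne_zero.2 hP, fun i hi => le_natDegree_of_ne_zero hi⟩

section Roots

variable [IsAlgClosed F]

theorem card_roots_fiberPoly (hx : Transcendental K x) :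
    (fiberPoly P Q x).roots.card = max P.natDegree Q.natDegree := by
  rw [← (IsAlgClosed.splits _).natDegree_eq_card_roots, natDegree_fiberPoly hx]

theorem countP_roots_fiberPoly [v.IsTrivialOn K] (hx : v x < 1) (hP : P ≠ 0) (Q : K[X]) :
    (fiberPoly P Q x).roots.countP (fun t => v t < 1) = P.natTrailingDegree ∧
      (fiberPoly P Q x).roots.countP (fun t => v t ≤ 1) = P.natDegree := by
  have hG := hasGaussNorm_fiberPoly hx hP Q
  have hne : fiberPoly P Q x ≠ 0 := fun h => by simpa [h] using hG.isLeast.1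
  have hlead : v (fiberPoly P Q x).leadingCoeff ≠ 0 := by simpa
  have hroots := (HasGaussNorm.const hlead).mul
    (.multiset_prod_X_sub_C one_ne_zero (fiberPoly P Q x).roots) one_ne_zero
  rw [← (IsAlgClosed.splits _).eq_prod_roots, zero_add, zero_add] at hroots
  exact (hroots.unique hG).2

end Roots

/-- At a double root `t` of `P - x * Q` the Wronskian of `P` and `Q` vanishes. -/
theorem nodup_roots_fiberPoly [CharZero K] (hx : Transcendental K x) (h : IsCoprime P Q)
    (hd : max P.natDegree Q.natDegree ≠ 0) : (fiberPoly P Q x).roots.Nodup := by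
  classical
  refine Multiset.nodup_iff_count_le_one.2 fun t => ?_
  rw [count_roots]
  by_contra! hlt
  have hne : fiberPoly P Q x ≠ 0 := fun h0 => by simp [h0] at hlt
  obtain ⟨ht, ht'⟩ := (one_lt_rootMultiplicity_iff_isRoot hne).1 hlt
  have hval := ht
  rw [IsRoot, eval_fiberPoly, sub_eq_zero] at hval
  have hderiv : aeval t (derivative P) = x * aeval t (derivative Q) := by
    have hd : derivative (fiberPoly P Q x) = fiberPoly (derivative P) (derivative Q) x := by
      simp [fiberPoly, derivative_map]
    rwa [hd, IsRoot, eval_fiberPoly, sub_eq_zero] at ht'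
  have hw : wronskian P Q = 0 := by
    by_contra hw
    refine transcendental_of_isRoot_fiberPoly hx h ht ⟨_, hw, ?_⟩
    rw [wronskian, map_sub, map_mul, map_mul, hval, hderiv]
    ring
  have := h.wronskian_eq_zero_iff.1 hw
  simp only [derivative_eq_zero] at this
  omega

end Fiber

section Implicitization

variable {K F : Type*} [Field K] [Field F]

theorem natDegree_minpoly_le_of_mem_adjoin [Algebra K F] {t y : F} (ht : IsIntegral K t)
    (hy : y ∈ IntermediateField.adjoin K {t}) :
    (minpoly K y).natDegree ≤ (minpoly K t).natDegree := by
  have := IntermediateField.adjoin.finiteDimensional ht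
  rw [← IntermediateField.adjoin.finrank ht]
  have hmin := minpoly.algebraMap_eq (A := K)
    (algebraMap (IntermediateField.adjoin K {t}) F).injective ⟨y, hy⟩
  exact hmin ▸ minpoly.natDegree_le _

theorem eval_map_aeval [Algebra K F] (Φ : K[X][X]) (x y : F) :
    (Φ.map (aeval x).toRingHom).eval y = aevalAeval x y Φ := by
  induction Φ using Polynomial.induction_on' with
  | add p q hp hq => simp_all
  | monomial n p => simp [← C_mul_X_pow_eq_monomial]

theorem aevalAeval_div_eq_zero [Algebra K F] {P₀ Q₀ P₁ Q₁ : K[X]} {Φ : K[X][X]} {t : F}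
    (ht : Transcendental K t)
    (hΦ : aevalAeval (algebraMap K[X] (RatFunc K) P₀ / algebraMap K[X] (RatFunc K) Q₀)
      (algebraMap K[X] (RatFunc K) P₁ / algebraMap K[X] (RatFunc K) Q₁) Φ = 0) :
    aevalAeval (aeval t P₀ / aeval t Q₀) (aeval t P₁ / aeval t Q₁) Φ = 0 := by
  let σ : RatFunc K →ₐ[K] F := RatFunc.liftAlgHom (aeval t)
    (nonZeroDivisors_le_comap_nonZeroDivisors_of_injective _ (transcendental_iff_injective.1 ht))
  have hσ (P Q : K[X]) : σ (algebraMap K[X] (RatFunc K) P / algebraMap K[X] (RatFunc K) Q) =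
      aeval t P / aeval t Q := RatFunc.liftAlgHom_apply_div _ _ _ _
  have hcomp : σ.comp (aevalAeval (algebraMap K[X] (RatFunc K) P₀ / algebraMap K[X] (RatFunc K) Q₀)
      (algebraMap K[X] (RatFunc K) P₁ / algebraMap K[X] (RatFunc K) Q₁)) =
      aevalAeval (aeval t P₀ / aeval t Q₀) (aeval t P₁ / aeval t Q₁) := by
    ext
    · simp [hσ]
    · simp [hσ]
  rw [← hcomp, AlgHom.comp_apply, hΦ, map_zero]

section OverRatFunc

variable [Algebra K F] [Algebra (RatFunc K) F] [IsScalarTower K (RatFunc K) F]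

variable (K F) in
theorem transcendental_algebraMap_X : Transcendental K (algebraMap (RatFunc K) F RatFunc.X) :=
  (transcendental_algebraMap_iff (algebraMap (RatFunc K) F).injective).2 RatFunc.transcendental_X

theorem map_map_algebraMap (Φ : K[X][X]) :
    (Φ.map (algebraMap K[X] (RatFunc K))).map (algebraMap (RatFunc K) F) =
      Φ.map (aeval (algebraMap (RatFunc K) F RatFunc.X)).toRingHom := by
  rw [Polynomial.map_map]
  congr 1
  ext
  · simp [IsScalarTower.algebraMap_apply K (RatFunc K) F]
  · simp

theorem natDegree_minpoly_eq {Φ : K[X][X]} (hirr : Irreducible Φ) (hdeg : Φ.natDegree ≠ 0) {y : F}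
    (hy : aevalAeval (algebraMap (RatFunc K) F RatFunc.X) y Φ = 0) :
    (minpoly (RatFunc K) y).natDegree = Φ.natDegree := by
  have hirr' : Irreducible (Φ.map (algebraMap K[X] (RatFunc K))) :=
    (hirr.isPrimitive hdeg).irreducible_iff_irreducible_map_fraction_map.1 hirr
  have hroot : aeval y (Φ.map (algebraMap K[X] (RatFunc K))) = 0 := by
    rw [← eval_map_algebraMap, map_map_algebraMap, eval_map_aeval, hy]
  rw [← minpoly.eq_of_irreducible hirr' hroot, natDegree_mul_C (by simpa using hirr'.ne_zero),
    natDegree_map_eq_of_injective (IsFractionRing.injective K[X] (RatFunc K))]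

theorem natDegree_minpoly_le_of_isRoot_fiberPoly {P₀ Q₀ P₁ Q₁ : K[X]} (hP₀ : P₀ ≠ 0) {t : F}
    (ht : (fiberPoly P₀ Q₀ (algebraMap (RatFunc K) F RatFunc.X)).IsRoot t) :
    (minpoly (RatFunc K) (aeval t P₁ / aeval t Q₁)).natDegree ≤
      max P₀.natDegree Q₀.natDegree := by
  have hX := RatFunc.transcendental_X (K := K)
  have hne := fiberPoly_ne_zero (Q := Q₀) hX hP₀
  have hroot : aeval t (fiberPoly P₀ Q₀ (RatFunc.X : RatFunc K)) = 0 := by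
    rwa [← eval_map_algebraMap, map_fiberPoly]
  have hmem (P : K[X]) : aeval t P ∈ IntermediateField.adjoin (RatFunc K) {t} := by
    rw [← aeval_map_algebraMap (RatFunc K)]
    exact IntermediateField.algebra_adjoin_le_adjoin _ _ (aeval_mem_adjoin_singleton _ _)
  rw [← natDegree_fiberPoly hX]
  exact (natDegree_minpoly_le_of_mem_adjoin (IsAlgebraic.isIntegral ⟨_, hne, hroot⟩)
    (div_mem (hmem P₁) (hmem Q₁))).trans (natDegree_le_of_dvd (minpoly.dvd _ _ hroot) hne)

end OverRatFunc

variable [Algebra K F]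

/-- The values of `y = P₁ / Q₁` at the parameters where `P₀ / Q₀` takes the value `x`. -/
noncomputable def fiberValues (P₀ Q₀ P₁ Q₁ : K[X]) (x : F) : Multiset F :=
  (fiberPoly P₀ Q₀ x).roots.map fun t => aeval t P₁ / aeval t Q₁

variable (F) in
/-- The genericity conditions on the parametrization `x = P₀ / Q₀`, `y = P₁ / Q₁`: both fractions
are reduced, `P₀` and `P₁` have no common root except possibly `0`, and the parametrization is
injective on parameters in `F` that are transcendental over `K`. -/
structure IsGenericParam (P₀ Q₀ P₁ Q₁ : K[X]) : Prop where
  coprime₀ : IsCoprime P₀ Q₀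
  coprime₁ : IsCoprime P₁ Q₁
  X_pow_mem : ∃ k, X ^ k ∈ Ideal.span {P₀, P₁}
  injOn : Set.InjOn (fun t : F => (aeval t P₀ / aeval t Q₀, aeval t P₁ / aeval t Q₁))
    {t | Transcendental K t}

namespace IsGenericParam

variable {P₀ Q₀ P₁ Q₁ : K[X]} (h : IsGenericParam F P₀ Q₀ P₁ Q₁)
include h

theorem nodup_fiberValues [CharZero K] {x : F} (hx : Transcendental K x)
    (hd : max P₀.natDegree Q₀.natDegree ≠ 0) : (fiberValues P₀ Q₀ P₁ Q₁ x).Nodup := by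
  refine (nodup_roots_fiberPoly hx h.coprime₀ hd).map_on fun t ht u hu htu => ?_
  have ht := isRoot_of_mem_roots ht
  have hu := isRoot_of_mem_roots hu
  refine h.injOn (transcendental_of_isRoot_fiberPoly hx h.coprime₀ ht)
    (transcendental_of_isRoot_fiberPoly hx h.coprime₀ hu) (Prod.ext ?_ htu)
  exact (eq_div_of_isRoot_fiberPoly h.coprime₀ ht).2.symm.trans
    (eq_div_of_isRoot_fiberPoly h.coprime₀ hu).2

theorem aevalAeval_eq_zero {x t : F} (hx : Transcendental K x) {Φ : K[X][X]}
    (hΦ : aevalAeval (algebraMap K[X] (RatFunc K) P₀ / algebraMap K[X] (RatFunc K) Q₀)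
      (algebraMap K[X] (RatFunc K) P₁ / algebraMap K[X] (RatFunc K) Q₁) Φ = 0)
    (ht : (fiberPoly P₀ Q₀ x).IsRoot t) : aevalAeval x (aeval t P₁ / aeval t Q₁) Φ = 0 := by
  rw [(eq_div_of_isRoot_fiberPoly h.coprime₀ ht).2]
  exact aevalAeval_div_eq_zero (transcendental_of_isRoot_fiberPoly hx h.coprime₀ ht) hΦ

variable [Algebra (RatFunc K) F] [IsScalarTower K (RatFunc K) F]

/-- The polynomial `Φ(x, y)` in `y` has at least `deg (P₀ - x * Q₀)` roots, which are conjugate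
over `K(x)`, and at most that many since they lie in `K(x, t)`. -/
theorem map_aeval_eq_C_mul_prod [CharZero K] [IsAlgClosed F]
    (hP₀ : P₀ ≠ 0) (hd : max P₀.natDegree Q₀.natDegree ≠ 0) {Φ : K[X][X]} (hirr : Irreducible Φ)
    (hΦ : aevalAeval (algebraMap K[X] (RatFunc K) P₀ / algebraMap K[X] (RatFunc K) Q₀)
      (algebraMap K[X] (RatFunc K) P₁ / algebraMap K[X] (RatFunc K) Q₁) Φ = 0) :
    Φ.natDegree = max P₀.natDegree Q₀.natDegree ∧
    ∃ ψ : F, Φ.map (aeval (algebraMap (RatFunc K) F RatFunc.X)).toRingHom = C ψ *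
      ((fiberValues P₀ Q₀ P₁ Q₁ (algebraMap (RatFunc K) F RatFunc.X)).map
        fun y => X - C y).prod := by
  have hx := transcendental_algebraMap_X K F
  set x := algebraMap (RatFunc K) F RatFunc.X
  have hinj : Function.Injective (aeval (R := K) x).toRingHom := transcendental_iff_injective.1 hx
  set f := Φ.map (aeval x).toRingHom
  have hf : f ≠ 0 := (Polynomial.map_ne_zero_iff hinj).2 hirr.ne_zero
  have hfdeg : f.natDegree = Φ.natDegree := natDegree_map_eq_of_injective hinj _
  have hcard : (fiberValues P₀ Q₀ P₁ Q₁ x).card = max P₀.natDegree Q₀.natDegree :=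
    (Multiset.card_map _ _).trans (card_roots_fiberPoly hx)
  have hsub : fiberValues P₀ Q₀ P₁ Q₁ x ≤ f.roots := by
    refine (Multiset.le_iff_subset (h.nodup_fiberValues hx hd)).2 fun y hy => ?_
    obtain ⟨t, ht, rfl⟩ := Multiset.mem_map.1 hy
    rw [mem_roots hf, IsRoot, eval_map_aeval, h.aevalAeval_eq_zero hx hΦ (isRoot_of_mem_roots ht)]
  have hge : max P₀.natDegree Q₀.natDegree ≤ Φ.natDegree :=
    hcard ▸ hfdeg ▸ (Multiset.card_le_card hsub).trans (card_roots' f)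
  obtain ⟨t, ht⟩ : ∃ t, t ∈ (fiberPoly P₀ Q₀ x).roots := by
    refine Multiset.card_pos_iff_exists_mem.1 ?_
    rw [card_roots_fiberPoly hx]
    omega
  have ht := isRoot_of_mem_roots ht
  have hle : Φ.natDegree ≤ max P₀.natDegree Q₀.natDegree := by
    rw [← natDegree_minpoly_eq hirr (by omega) (h.aevalAeval_eq_zero hx hΦ ht)]
    exact natDegree_minpoly_le_of_isRoot_fiberPoly hP₀ ht
  refine ⟨le_antisymm hle hge, f.leadingCoeff, ?_⟩
  have hcard_le : f.roots.card ≤ (fiberValues P₀ Q₀ P₁ Q₁ x).card :=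
    (card_roots' f).trans (hfdeg ▸ hle.trans hcard.ge)
  rw [Multiset.eq_of_le_of_card_le hsub hcard_le]
  exact (IsAlgClosed.splits f).eq_prod_roots

end IsGenericParam

end Implicitization

section FiberValuations

/-- The Iverson bracket `[b ≠ 0] * a`. -/
def gated (a b : ℕ) : ℕ := if b ≠ 0 then a else 0

theorem gated_of_ne_zero {a b : ℕ} (hb : b ≠ 0) : gated a b = a := if_pos hb

/-- The order of vanishing at infinity of the reduced fraction `P / Q`, counting poles as `0`. -/
noncomputable def ordInfty {K : Type*} [Semiring K] (P Q : K[X]) : ℕ :=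
  max P.natDegree Q.natDegree - P.natDegree

theorem exists_map_pow_eq_replicate {Γ : Type*} [LinearOrderedCommGroupWithZero Γ] {ξ : Γ}
    (hξ₀ : ξ ≠ 0) (hξ : ξ < 1) {s : Multiset Γ} (h : ∀ ρ ∈ s, ρ ^ s.card = ξ) (b : ℕ) :
    ∃ r k, r ≠ 0 ∧ r < 1 ∧ r ^ gated s.card b = ξ ^ gated b s.card ∧
      s.map (· ^ b) = Multiset.replicate (gated s.card b) r + Multiset.replicate k 1 := by
  rcases s.empty_or_exists_mem with rfl | ⟨ρ, hρ⟩
  · exact ⟨ξ, 0, hξ₀, hξ, by simp [gated], by simp [gated]⟩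
  have hcard : s.card ≠ 0 := (Multiset.card_pos_iff_exists_mem.2 ⟨ρ, hρ⟩).ne'
  rcases eq_or_ne b 0 with rfl | hb
  · exact ⟨ξ, s.card, hξ₀, hξ, by simp [gated], by simp [gated]⟩
  have hs : s = Multiset.replicate s.card ρ := Multiset.eq_replicate.2
    ⟨rfl, fun σ hσ => pow_left_injective hcard ((h σ hσ).trans (h ρ hρ).symm)⟩
  have hρ₀ : ρ ≠ 0 := by
    rintro rfl
    exact hξ₀ (by rw [← h 0 hρ, zero_pow hcard])
  have hρ1 : ρ < 1 := (pow_lt_one_iff hcard).1 ((h ρ hρ).trans_lt hξ)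
  refine ⟨ρ ^ b, 0, pow_ne_zero b hρ₀, pow_lt_one₀ zero_le hρ1 hb, ?_, ?_⟩
  · rw [gated_of_ne_zero hb, gated_of_ne_zero hcard, pow_right_comm, h ρ hρ]
  · rw [gated_of_ne_zero hb]
    conv_lhs => rw [hs]
    simp

theorem eq_filter_lt_add_filter_gt_add_filter_eq {α β : Type*} [LinearOrder β] (s : Multiset α)
    (f : α → β) (b : β) :
    s = s.filter (f · < b) + s.filter (b < f ·) + s.filter (f · = b) := by
  induction s using Multiset.induction with
  | empty => simp
  | cons a s ih =>
    conv_lhs => rw [ih]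
    rcases lt_trichotomy (f a) b with h | h | h
    · simp [h, h.not_gt, h.ne]
    · simp [h]
    · simp [h, h.not_gt, h.ne']

theorem ne_zero_of_transcendental {R A : Type*} [CommRing R] [Nontrivial R] [Ring A] [Algebra R A]
    {x : A} (hx : Transcendental R x) : x ≠ 0 := by
  rintro rfl
  exact hx isAlgebraic_zero

variable {K F Γ : Type*} [Field K] [Field F] [Algebra K F]
  [LinearOrderedCommGroupWithZero Γ] {v : Valuation F Γ} [v.IsTrivialOn K] {P₀ Q₀ P₁ Q₁ : K[X]}
  {x : F}

theorem natTrailingDegree_eq_zero_or_of_isCoprime {P Q : K[X]} (h : IsCoprime P Q) :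
    P.natTrailingDegree = 0 ∨ Q.natTrailingDegree = 0 := by
  simp only [natTrailingDegree_eq_zero, coeff_zero_eq_eval_zero]
  by_contra! h0
  obtain ⟨p, q, hpq⟩ := h
  simpa [h0] using congrArg (eval 0) hpq

theorem map_filter_eq_replicate_of_eq_one (hx : Transcendental K x) (hx1 : v x < 1)
    (h : IsGenericParam F P₀ Q₀ P₁ Q₁) (hQ₁ : Q₁ ≠ 0) :
    ((fiberPoly P₀ Q₀ x).roots.filter (v · = 1)).map
        (fun t => min 1 (v (aeval t P₁ / aeval t Q₁))) =
      Multiset.replicate ((fiberPoly P₀ Q₀ x).roots.filter (v · = 1)).card 1 := by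
  rw [← Multiset.map_const']
  refine Multiset.map_congr rfl fun t ht => min_eq_left ?_
  obtain ⟨ht, hvt⟩ := Multiset.mem_filter.1 ht
  have ht := isRoot_of_mem_roots ht
  obtain ⟨k, hk⟩ := h.X_pow_mem
  refine one_le_valuation_div_of_eq_one hk hvt ?_ fun h0 =>
    transcendental_of_isRoot_fiberPoly hx h.coprime₀ ht ⟨Q₁, hQ₁, h0⟩
  rw [IsRoot, eval_fiberPoly, sub_eq_zero] at ht
  rw [ht, map_mul]
  exact (mul_le_of_le_one_right' (valuation_aeval_le_one hvt.le Q₀)).trans_lt hx1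

variable [IsAlgClosed F]

theorem exists_replicate_of_lt_one (hx : Transcendental K x) (hx1 : v x < 1)
    (h₀ : IsCoprime P₀ Q₀) (h₁ : IsCoprime P₁ Q₁)
    (hP₀ : P₀ ≠ 0) (hQ₀ : Q₀ ≠ 0) (hP₁ : P₁ ≠ 0) (hQ₁ : Q₁ ≠ 0) :
    ∃ r k, r ≠ 0 ∧ r < 1 ∧ r ^ gated P₀.natTrailingDegree P₁.natTrailingDegree =
        v x ^ gated P₁.natTrailingDegree P₀.natTrailingDegree ∧
      ((fiberPoly P₀ Q₀ x).roots.filter (v · < 1)).map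
          (fun t => min 1 (v (aeval t P₁ / aeval t Q₁))) =
        Multiset.replicate (gated P₀.natTrailingDegree P₁.natTrailingDegree) r +
          Multiset.replicate k 1 := by
  set s := ((fiberPoly P₀ Q₀ x).roots.filter (v · < 1)) with hs
  have hroot {t : F} (ht : t ∈ s) : (fiberPoly P₀ Q₀ x).IsRoot t ∧ v t < 1 :=
    (Multiset.mem_filter.1 ht).imp isRoot_of_mem_roots id
  have hne {t : F} (ht : t ∈ s) : t ≠ 0 :=
    ne_zero_of_transcendental (transcendental_of_isRoot_fiberPoly hx h₀ (hroot ht).1)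
  have hcard : (s.map v).card = P₀.natTrailingDegree := by
    rw [Multiset.card_map, hs, ← Multiset.countP_eq_card_filter,
      (countP_roots_fiberPoly hx1 hP₀ Q₀).1]
  have hpow : ∀ ρ ∈ s.map v, ρ ^ (s.map v).card = v x := by
    rw [hcard, Multiset.forall_mem_map_iff]
    intro t ht
    rw [← min_one_valuation_div_of_lt_one (hne ht) (hroot ht).2 hP₀ hQ₀
      (natTrailingDegree_eq_zero_or_of_isCoprime h₀),
      ← (eq_div_of_isRoot_fiberPoly h₀ (hroot ht).1).2, min_eq_right hx1.le]
  have hy : s.map (fun t => min 1 (v (aeval t P₁ / aeval t Q₁))) =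
      (s.map v).map (· ^ P₁.natTrailingDegree) := by
    rw [Multiset.map_map]
    exact Multiset.map_congr rfl fun t ht => min_one_valuation_div_of_lt_one (hne ht) (hroot ht).2
      hP₁ hQ₁ (natTrailingDegree_eq_zero_or_of_isCoprime h₁)
  simpa only [hcard, hy] using exists_map_pow_eq_replicate
    (v.ne_zero_iff.2 (ne_zero_of_transcendental hx)) hx1 hpow P₁.natTrailingDegree

theorem exists_replicate_of_one_lt (hx : Transcendental K x) (hx1 : v x < 1)
    (h₀ : IsCoprime P₀ Q₀) (hP₀ : P₀ ≠ 0) (hQ₀ : Q₀ ≠ 0) (hP₁ : P₁ ≠ 0) (hQ₁ : Q₁ ≠ 0) :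
    ∃ r k, r ≠ 0 ∧ r < 1 ∧ r ^ gated (ordInfty P₀ Q₀) (ordInfty P₁ Q₁) =
        v x ^ gated (ordInfty P₁ Q₁) (ordInfty P₀ Q₀) ∧
      ((fiberPoly P₀ Q₀ x).roots.filter (1 < v ·)).map
          (fun t => min 1 (v (aeval t P₁ / aeval t Q₁))) =
        Multiset.replicate (gated (ordInfty P₀ Q₀) (ordInfty P₁ Q₁)) r +
          Multiset.replicate k 1 := by
  set s := ((fiberPoly P₀ Q₀ x).roots.filter (1 < v ·)) with hs
  have hroot {t : F} (ht : t ∈ s) : (fiberPoly P₀ Q₀ x).IsRoot t ∧ 1 < v t :=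
    (Multiset.mem_filter.1 ht).imp isRoot_of_mem_roots id
  have hcard : (s.map fun t => (v t)⁻¹).card = ordInfty P₀ Q₀ := by
    have hsum := (fiberPoly P₀ Q₀ x).roots.card_eq_countP_add_countP (v · ≤ 1)
    simp only [card_roots_fiberPoly hx, (countP_roots_fiberPoly hx1 hP₀ Q₀).2, not_le] at hsum
    rw [Multiset.card_map, hs, ← Multiset.countP_eq_card_filter, ordInfty]
    omega
  have hpow : ∀ ρ ∈ s.map fun t => (v t)⁻¹, ρ ^ (s.map fun t => (v t)⁻¹).card = v x := by
    rw [hcard, Multiset.forall_mem_map_iff]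
    intro t ht
    rw [ordInfty, ← min_one_valuation_div_of_one_lt (hroot ht).2 hP₀ hQ₀,
      ← (eq_div_of_isRoot_fiberPoly h₀ (hroot ht).1).2, min_eq_right hx1.le]
  have hy : s.map (fun t => min 1 (v (aeval t P₁ / aeval t Q₁))) =
      (s.map fun t => (v t)⁻¹).map (· ^ ordInfty P₁ Q₁) := by
    rw [Multiset.map_map]
    exact Multiset.map_congr rfl fun t ht => min_one_valuation_div_of_one_lt (hroot ht).2 hP₁ hQ₁
  simpa only [hcard, hy] using exists_map_pow_eq_replicate
    (v.ne_zero_iff.2 (ne_zero_of_transcendental hx)) hx1 hpow (ordInfty P₁ Q₁)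

theorem exists_map_fiberValues_eq_replicate (hx : Transcendental K x) (hx1 : v x < 1)
    (h : IsGenericParam F P₀ Q₀ P₁ Q₁) (hP₀ : P₀ ≠ 0) (hQ₀ : Q₀ ≠ 0) (hP₁ : P₁ ≠ 0)
    (hQ₁ : Q₁ ≠ 0) :
    ∃ r r' k, r ≠ 0 ∧ r < 1 ∧ r' ≠ 0 ∧ r' < 1 ∧
      r ^ gated P₀.natTrailingDegree P₁.natTrailingDegree =
        v x ^ gated P₁.natTrailingDegree P₀.natTrailingDegree ∧
      r' ^ gated (ordInfty P₀ Q₀) (ordInfty P₁ Q₁) =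
        v x ^ gated (ordInfty P₁ Q₁) (ordInfty P₀ Q₀) ∧
      (fiberValues P₀ Q₀ P₁ Q₁ x).map (fun y => min 1 (v y)) =
        Multiset.replicate (gated P₀.natTrailingDegree P₁.natTrailingDegree) r +
          Multiset.replicate (gated (ordInfty P₀ Q₀) (ordInfty P₁ Q₁)) r' +
          Multiset.replicate k 1 := by
  classical
  obtain ⟨r, k, hr₀, hr1, hr, hlt⟩ :=
    exists_replicate_of_lt_one hx hx1 h.coprime₀ h.coprime₁ hP₀ hQ₀ hP₁ hQ₁
  obtain ⟨r', k', hr₀', hr1', hr', hgt⟩ :=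
    exists_replicate_of_one_lt hx hx1 h.coprime₀ hP₀ hQ₀ hP₁ hQ₁
  have heq := map_filter_eq_replicate_of_eq_one hx hx1 h hQ₁
  refine ⟨r, r', k + k' + ((fiberPoly P₀ Q₀ x).roots.filter (v · = 1)).card, hr₀, hr1, hr₀', hr1',
    hr, hr', ?_⟩
  rw [fiberValues, Multiset.map_map, Function.comp_def]
  conv_lhs => rw [eq_filter_lt_add_filter_gt_add_filter_eq (fiberPoly P₀ Q₀ x).roots v 1]
  simp only [Multiset.map_add, hlt, hgt, heq, Multiset.replicate_add]
  abel

end FiberValuations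

section ConvexGeometry

variable {E : Type*} [NormedAddCommGroup E] [NormedSpace ℝ E] {S : Set E} {a b : E}
  {l l' : E →L[ℝ] ℝ}

theorem isMinOn_convexHull (h : IsMinOn l S a) : IsMinOn l (convexHull ℝ S) a :=
  fun _ hy => convexHull_min h (convex_halfSpace_ge l.isLinear (l a)) hy

theorem mem_frontier_of_isMinOn (hl : l ≠ 0) (ha : a ∈ S) (h : IsMinOn l S a) : a ∈ frontier S :=
  ⟨subset_closure ha, fun hint =>
    hl ((h.isLocalMin (mem_interior_iff_mem_nhds.1 hint)).hasFDerivAt_eq_zero l.hasFDerivAt)⟩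

theorem segment_subset_frontier_convexHull (hl : l ≠ 0) (ha : a ∈ S) (hb : b ∈ S)
    (h : IsMinOn l S a) (hab : l a = l b) : segment ℝ a b ⊆ frontier (convexHull ℝ S) := by
  intro z hz
  refine mem_frontier_of_isMinOn hl (segment_subset_convexHull ha hb hz) fun y hy => ?_
  obtain ⟨s, t, -, -, hst, rfl⟩ := hz
  have hz : l (s • a + t • b) = l a := by
    rw [map_add, map_smul, map_smul, ← hab, ← add_smul, hst, one_smul]
  exact hz.trans_le (isMinOn_convexHull h hy)

theorem isExposed_setOf_isMinOn (l : E →L[ℝ] ℝ) (S : Set E) :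
    IsExposed ℝ S {a ∈ S | IsMinOn l S a} := by
  simpa [ContinuousLinearMap.toExposed, isMinOn_iff] using
    ContinuousLinearMap.toExposed.isExposed (l := -l) (A := S)

theorem mem_extremePoints_convexHull (ha : a ∈ S) (h : IsMinOn l S a) (h' : IsMinOn l' S a)
    (hinj : Function.Injective (l.prod l')) : a ∈ (convexHull ℝ S).extremePoints ℝ := by
  have haS := subset_convexHull ℝ S ha
  have h := isMinOn_convexHull h
  have h' := isMinOn_convexHull h'
  have hface : {b ∈ convexHull ℝ S | IsMinOn l (convexHull ℝ S) b} ∩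
      {b ∈ convexHull ℝ S | IsMinOn l' (convexHull ℝ S) b} = {a} := by
    refine Set.eq_singleton_iff_unique_mem.2
      ⟨⟨⟨haS, h⟩, haS, h'⟩, fun b hb => hinj (Prod.ext ?_ ?_)⟩
    · exact (hb.1.2 haS).antisymm (h hb.1.1)
    · exact (hb.2.2 haS).antisymm (h' hb.1.1)
  rw [← isExtreme_singleton, ← hface]
  exact ((isExposed_setOf_isMinOn l _).inter (isExposed_setOf_isMinOn l' _)).isExtreme

end ConvexGeometry

section LatticeHull

/-- The convex hull in `ℝ²` of a set of lattice points. -/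
def latticeHull (A : Set (ℕ × ℕ)) : Set (ℝ × ℝ) :=
  convexHull ℝ (Prod.map Nat.cast Nat.cast '' A)

/-- The linear functional `(x, y) ↦ a * x + b * y`. -/
noncomputable def weight (a b : ℕ) : ℝ × ℝ →L[ℝ] ℝ :=
  (a : ℝ) • ContinuousLinearMap.fst ℝ ℝ ℝ + (b : ℝ) • ContinuousLinearMap.snd ℝ ℝ ℝ

theorem weight_cast (a b : ℕ) (p : ℕ × ℕ) :
    weight a b (Prod.map Nat.cast Nat.cast p) = ((a * p.1 + b * p.2 : ℕ) : ℝ) := by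
  simp [weight]

theorem weight_ne_zero {a b : ℕ} (h : a ≠ 0 ∨ b ≠ 0) : weight a b ≠ 0 := by
  contrapose! h
  have ha := weight_cast a b (1, 0)
  have hb := weight_cast a b (0, 1)
  rw [h] at ha hb
  exact_mod_cast (by simpa using And.intro ha hb : (0 : ℝ) = a ∧ (0 : ℝ) = b).imp Eq.symm Eq.symm

theorem weight_prod_injective {a b c d : ℕ} (h : a * d ≠ b * c) :
    Function.Injective ((weight a b).prod (weight c d)) := by
  rw [injective_iff_map_eq_zero]
  rintro ⟨x, y⟩ hxy
  obtain ⟨h₁, h₂⟩ : (a : ℝ) * x + b * y = 0 ∧ (c : ℝ) * x + d * y = 0 := by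
    simpa [weight] using hxy
  have hdet : (a * d - b * c : ℝ) ≠ 0 := sub_ne_zero.2 (mod_cast h)
  refine Prod.ext (mul_left_cancel₀ hdet ?_) (mul_left_cancel₀ hdet ?_)
  · linear_combination (norm := (simp; ring)) (d : ℝ) * h₁ - b * h₂
  · linear_combination (norm := (simp; ring)) (a : ℝ) * h₂ - c * h₁

variable {A : Set (ℕ × ℕ)} {p q : ℕ × ℕ} {a b c d : ℕ}

theorem isMinOn_weight (h : ∀ q ∈ A, a * p.1 + b * p.2 ≤ a * q.1 + b * q.2) :
    IsMinOn (weight a b) (Prod.map Nat.cast Nat.cast '' A) (Prod.map Nat.cast Nat.cast p) := by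
  rintro _ ⟨q, hq, rfl⟩
  simpa only [weight_cast, Set.mem_ofPred_eq] using Nat.cast_le.2 (h q hq)

theorem mem_extremePoints_latticeHull (hp : p ∈ A)
    (h : ∀ q ∈ A, a * p.1 + b * p.2 ≤ a * q.1 + b * q.2)
    (h' : ∀ q ∈ A, c * p.1 + d * p.2 ≤ c * q.1 + d * q.2) (hdet : a * d ≠ b * c) :
    ((p.1 : ℝ), (p.2 : ℝ)) ∈ (latticeHull A).extremePoints ℝ :=
  mem_extremePoints_convexHull (Set.mem_image_of_mem _ hp) (isMinOn_weight h) (isMinOn_weight h')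
    (weight_prod_injective hdet)

theorem segment_subset_frontier_latticeHull (hp : p ∈ A) (hq : q ∈ A) (hab : a ≠ 0 ∨ b ≠ 0)
    (h : ∀ q ∈ A, a * p.1 + b * p.2 ≤ a * q.1 + b * q.2)
    (hpq : a * p.1 + b * p.2 = a * q.1 + b * q.2) :
    segment ℝ ((p.1 : ℝ), (p.2 : ℝ)) ((q.1 : ℝ), (q.2 : ℝ)) ⊆ frontier (latticeHull A) :=
  segment_subset_frontier_convexHull (weight_ne_zero hab) (Set.mem_image_of_mem _ hp)
    (Set.mem_image_of_mem _ hq) (isMinOn_weight h)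
    ((weight_cast a b p).trans (hpq ▸ (weight_cast a b q).symm))

/-- `p` is a vertex of `N` joined to `(0, E)` and to `(E', 0)` by segments of the boundary. -/
def IsChainVertex (N : Set (ℝ × ℝ)) (E E' : ℝ) (p : ℝ × ℝ) : Prop :=
  p ∈ N.extremePoints ℝ ∧ segment ℝ (0, E) p ⊆ frontier N ∧ segment ℝ p (E', 0) ⊆ frontier N

namespace LowerLeftCorner

variable {m n m' n' : ℕ} (h : LowerLeftCorner A m n m' n')
include h

theorem top_mem_extremePoints :
    ((0 : ℝ), ((n + n' : ℕ) : ℝ)) ∈ (latticeHull A).extremePoints ℝ := by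
  have := mem_extremePoints_latticeHull (A := A) (a := 1) (b := 0) (c := n + n') (d := 1)
    h.top.1 (by simp) (fun q hq => ?_) (by simp)
  · simpa using this
  rcases q with ⟨_ | i, j⟩
  · simpa using h.top.2 hq
  · nlinarith

theorem right_mem_extremePoints :
    (((m + m' : ℕ) : ℝ), (0 : ℝ)) ∈ (latticeHull A).extremePoints ℝ := by
  have := mem_extremePoints_latticeHull (A := A) (a := 0) (b := 1) (c := 1) (d := m + m')
    h.right.1 (by simp) (fun q hq => ?_) (by simp)
  · simpa using this
  rcases q with ⟨i, _ | j⟩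
  · simpa using h.right.2 hq
  · nlinarith

theorem segment_subset_frontier (hdet : n' * m = n * m') (hn : n + n' ≠ 0) :
    segment ℝ ((0 : ℝ), ((n + n' : ℕ) : ℝ)) (((m + m' : ℕ) : ℝ), (0 : ℝ)) ⊆
      frontier (latticeHull A) := by
  have := segment_subset_frontier_latticeHull (A := A) (a := n + n') (b := m + m') h.top.1 h.right.1
    (.inl hn) (fun q hq => ?_) (by ring)
  · simpa using this
  · have := h.upper q hq
    have := h.lower q hq
    nlinarith

theorem isChainVertex (hdet : n' * m < n * m') :
    IsChainVertex (latticeHull A) ((n + n' : ℕ) : ℝ) ((m + m' : ℕ) : ℝ) (m, n') := by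
  have hupper (q) (hq : q ∈ A) : n * m + m * n' ≤ n * q.1 + m * q.2 := by linarith [h.upper q hq]
  have hlower (q) (hq : q ∈ A) : n' * m + m' * n' ≤ n' * q.1 + m' * q.2 := by
    linarith [h.lower q hq]
  have hcorner := h.corner hdet
  refine ⟨mem_extremePoints_latticeHull hcorner hupper hlower (by linarith), ?_, ?_⟩
  · rw [segment_symm]
    simpa using segment_subset_frontier_latticeHull (A := A) hcorner h.top.1
      (.inl (by rintro rfl; simp at hdet)) hupper (by ring)
  · simpa using segment_subset_frontier_latticeHull (A := A) hcorner h.right.1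
      (.inr (by rintro rfl; simp at hdet)) hlower (by ring)

end LowerLeftCorner

theorem lowerLeft_boundary {m n m' n' : ℕ}
    (h : LowerLeftCorner A m n m' n' ∨ LowerLeftCorner A m' n' m n) (hn : n + n' ≠ 0) :
    ((0 : ℝ), ((n + n' : ℕ) : ℝ)) ∈ (latticeHull A).extremePoints ℝ ∧
      (((m + m' : ℕ) : ℝ), (0 : ℝ)) ∈ (latticeHull A).extremePoints ℝ ∧
      (n' * m = n * m' → segment ℝ ((0 : ℝ), ((n + n' : ℕ) : ℝ)) (((m + m' : ℕ) : ℝ), (0 : ℝ)) ⊆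
        frontier (latticeHull A)) ∧
      (n' * m < n * m' →
        IsChainVertex (latticeHull A) ((n + n' : ℕ) : ℝ) ((m + m' : ℕ) : ℝ) (m, n')) ∧
      (n * m' < n' * m →
        IsChainVertex (latticeHull A) ((n + n' : ℕ) : ℝ) ((m + m' : ℕ) : ℝ) (m', n)) := by
  rcases h with h | h
  · exact ⟨h.top_mem_extremePoints, h.right_mem_extremePoints,
      fun hdet => h.segment_subset_frontier hdet hn, h.isChainVertex,
      fun hdet => absurd h.convex hdet.not_ge⟩
  · rw [add_comm n] at hn ⊢
    rw [add_comm m]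
    exact ⟨h.top_mem_extremePoints, h.right_mem_extremePoints,
      fun hdet => h.segment_subset_frontier hdet.symm hn, fun hdet => absurd h.convex hdet.not_ge,
      h.isChainVertex⟩

end LatticeHull

section Bivariate

variable {R : Type*} [CommRing R]

theorem exists_coeff_coeff_zero_ne_zero [IsDomain R] {Φ : R[X][X]} (hirr : Irreducible Φ)
    (hd : Φ.natDegree ≠ 0) : ∃ j, (Φ.coeff j).coeff 0 ≠ 0 := by
  by_contra! hc
  obtain ⟨Ψ, rfl⟩ : C X ∣ Φ := C_dvd_iff_dvd_coeff _ _ |>.2 fun j => X_dvd_iff.2 (hc j)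
  rcases hirr.isUnit_or_isUnit rfl with h | h
  · exact not_isUnit_X (isUnit_C.1 h)
  · exact hd (by rw [natDegree_mul (by simp) h.ne_zero, natDegree_C, natDegree_eq_zero_of_isUnit h])

theorem equivMvPolynomial_monomial_monomial (i j : ℕ) (a : R) :
    Bivariate.equivMvPolynomial R (monomial j (monomial i a)) =
      MvPolynomial.monomial (Finsupp.single 0 i + Finsupp.single 1 j) a := by
  simp [← C_mul_X_pow_eq_monomial, MvPolynomial.X_pow_eq_monomial, MvPolynomial.C_mul_monomial,
    MvPolynomial.monomial_mul]

theorem coeff_equivMvPolynomial (Φ : R[X][X]) (d : Fin 2 →₀ ℕ) :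
    (Bivariate.equivMvPolynomial R Φ).coeff d = (Φ.coeff (d 1)).coeff (d 0) := by
  induction Φ using Polynomial.induction_on' with
  | add p q hp hq => simp [hp, hq]
  | monomial j p =>
    induction p using Polynomial.induction_on' with
    | add p q hp hq => simp [hp, hq]
    | monomial i a =>
      rw [equivMvPolynomial_monomial_monomial, MvPolynomial.coeff_monomial, coeff_monomial,
        apply_ite (coeff · (d 0)), coeff_monomial, coeff_zero, ← ite_and]
      congr 1
      simp [Finsupp.ext_iff, Fin.forall_fin_two, and_comm]

theorem aeval_equivMvPolynomial {S : Type*} [CommRing S] [Algebra R S] (Φ : R[X][X]) (x y : S) :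
    MvPolynomial.aeval ![x, y] (Bivariate.equivMvPolynomial R Φ) = aevalAeval x y Φ := by
  induction Φ using Polynomial.induction_on' with
  | add p q hp hq => simp_all
  | monomial j p =>
    induction p using Polynomial.induction_on' with
    | add p q hp hq => simp_all
    | monomial i a => simp [← C_mul_X_pow_eq_monomial]

theorem newtonPolygon_eq_latticeHull (φ : MvPolynomial (Fin 2) ℂ) :
    newtonPolygon φ = latticeHull (exponents ((Bivariate.equivMvPolynomial ℂ).symm φ)) := by
  rw [newtonPolygon, latticeHull]
  congr 1
  ext p
  have hφ (d : Fin 2 →₀ ℕ) : d ∈ φ.support ↔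
      (((Bivariate.equivMvPolynomial ℂ).symm φ).coeff (d 1)).coeff (d 0) ≠ 0 := by
    rw [← coeff_equivMvPolynomial, AlgEquiv.apply_symm_apply, MvPolynomial.mem_support_iff]
  constructor
  · rintro ⟨d, hd, rfl⟩
    exact ⟨(d 0, d 1), (hφ d).1 hd, rfl⟩
  · rintro ⟨⟨i, j⟩, hij, rfl⟩
    exact ⟨Finsupp.single 0 i + Finsupp.single 1 j, (hφ _).2 (by simpa [exponents] using hij),
      by simp⟩

end Bivariate

section Corner

variable {K : Type*} [Field K] [CharZero K] {P₀ Q₀ P₁ Q₁ : K[X]}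

theorem IsGenericParam.lowerLeftCorner_exponents
    (h : IsGenericParam (AlgebraicClosure (RatFunc K)) P₀ Q₀ P₁ Q₁)
    (hP₀ : P₀ ≠ 0) (hQ₀ : Q₀ ≠ 0) (hP₁ : P₁ ≠ 0) (hQ₁ : Q₁ ≠ 0)
    (hd : max P₀.natDegree Q₀.natDegree ≠ 0) {Φ : K[X][X]} (hirr : Irreducible Φ)
    (hΦ : aevalAeval (algebraMap K[X] (RatFunc K) P₀ / algebraMap K[X] (RatFunc K) Q₀)
      (algebraMap K[X] (RatFunc K) P₁ / algebraMap K[X] (RatFunc K) Q₁) Φ = 0)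
    {n m n' m' : ℕ}
    (hn : n = gated P₀.natTrailingDegree P₁.natTrailingDegree)
    (hm : m = gated P₁.natTrailingDegree P₀.natTrailingDegree)
    (hn' : n' = gated (ordInfty P₀ Q₀) (ordInfty P₁ Q₁))
    (hm' : m' = gated (ordInfty P₁ Q₁) (ordInfty P₀ Q₀)) :
    LowerLeftCorner (exponents Φ) m n m' n' ∨ LowerLeftCorner (exponents Φ) m' n' m n := by
  have hx := transcendental_algebraMap_X K (AlgebraicClosure (RatFunc K))
  obtain ⟨B, _, hx1⟩ := exists_valuationSubring_lt_one hx
  obtain ⟨r, r', k, hr₀, hr1, hr₀', hr1', hr, hr', hs⟩ :=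
    exists_map_fiberValues_eq_replicate hx hx1 h hP₀ hQ₀ hP₁ hQ₁
  obtain ⟨hdeg, ψ, hprod⟩ := h.map_aeval_eq_C_mul_prod hP₀ hd hirr hΦ
  obtain ⟨j, hj⟩ := exists_coeff_coeff_zero_ne_zero hirr (hdeg ▸ hd)
  rw [← hn, ← hm] at hr
  rw [← hn', ← hm'] at hr'
  rw [← hn, ← hn'] at hs
  have hx₀ := ne_zero_of_transcendental hx
  rcases le_total r' r with hrr' | hrr'
  · exact .inl (lowerLeftCorner_exponents_of_replicate hx₀ hx1 hj hprod hs
      hr₀ hr₀' hrr' hr1 hr hr')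
  · rw [add_comm (Multiset.replicate n r)] at hs
    exact .inr (lowerLeftCorner_exponents_of_replicate hx₀ hx1 hj hprod hs
      hr₀' hr₀ hrr' hr1' hr' hr)

theorem lowerLeft_boundary_gated {A : Set (ℕ × ℕ)} {a b a' b' : ℕ} {δ : ℤ}
    (h : LowerLeftCorner A (gated b a) (gated a b) (gated b' a') (gated a' b') ∨
      LowerLeftCorner A (gated b' a') (gated a' b') (gated b a) (gated a b))
    (hE : gated a b + gated a' b' ≠ 0) (hδ : δ = a' * b - a * b') :
    ((0 : ℝ), ((gated a b + gated a' b' : ℕ) : ℝ)) ∈ (latticeHull A).extremePoints ℝ ∧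
      (((gated b a + gated b' a' : ℕ) : ℝ), (0 : ℝ)) ∈ (latticeHull A).extremePoints ℝ ∧
      (¬ ((a ≠ 0 ∧ b ≠ 0 ∧ a' ≠ 0 ∧ b' ≠ 0) ∧ δ ≠ 0) →
        segment ℝ ((0 : ℝ), ((gated a b + gated a' b' : ℕ) : ℝ))
          (((gated b a + gated b' a' : ℕ) : ℝ), (0 : ℝ)) ⊆ frontier (latticeHull A)) ∧
      ((a ≠ 0 ∧ b ≠ 0 ∧ a' ≠ 0 ∧ b' ≠ 0) ∧ δ ≠ 0 →
        IsChainVertex (latticeHull A) ((gated a b + gated a' b' : ℕ) : ℝ)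
          ((gated b a + gated b' a' : ℕ) : ℝ)
          (if δ < 0 then ((b : ℝ), (a' : ℝ)) else ((b' : ℝ), (a : ℝ)))) := by
  obtain ⟨htop, hright, hseg, hlt, hgt⟩ := lowerLeft_boundary h hE
  refine ⟨htop, hright, fun hnot => hseg ?_, fun ⟨⟨ha, hb, ha', hb'⟩, hδ₀⟩ => ?_⟩
  · by_cases h0 : a ≠ 0 ∧ b ≠ 0 ∧ a' ≠ 0 ∧ b' ≠ 0
    · have hδ₀ : δ = 0 := by tauto
      simp only [gated_of_ne_zero, h0, ne_eq, not_false_eq_true]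
      zify
      linarith
    · simp only [gated]
      grind
  · simp only [gated_of_ne_zero, ha, hb, ha', hb', ne_eq, not_false_eq_true] at hlt hgt ⊢
    split_ifs with hneg
    · exact hlt (by zify; linarith)
    · exact hgt (by zify; linarith [lt_of_le_of_ne (not_lt.1 hneg) hδ₀.symm])

theorem gated_add_gated_ne_zero {a b a' b' : ℕ} (h : gated a b + gated a' b' ≠ 0) :
    ((a ≠ 0 ∧ b ≠ 0) ∨ (a' ≠ 0 ∧ b' ≠ 0)) ∧ gated b a + gated b' a' ≠ 0 := by
  simp only [gated] at *
  grind

end Corner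

section Genericity

variable {K σ : Type*} [Field K]

/-- `p` holds for generic coefficient vectors: off the zero locus of some nonzero polynomial. -/
def HoldsGenerically (p : (σ → K) → Prop) : Prop :=
  ∃ G : MvPolynomial σ K, G ≠ 0 ∧ ∀ c, MvPolynomial.eval c G ≠ 0 → p c

theorem HoldsGenerically.and {p q : (σ → K) → Prop} :
    HoldsGenerically p → HoldsGenerically q → HoldsGenerically fun c => p c ∧ q c := by
  rintro ⟨G, hG, hp⟩ ⟨H, hH, hq⟩
  refine ⟨G * H, mul_ne_zero hG hH, fun c hc => ?_⟩
  rw [map_mul] at hc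
  exact ⟨hp c (left_ne_zero_of_mul hc), hq c (right_ne_zero_of_mul hc)⟩

theorem HoldsGenerically.mono {p q : (σ → K) → Prop} (hp : HoldsGenerically p)
    (h : ∀ c, p c → q c) : HoldsGenerically q :=
  hp.imp fun _ hG => ⟨hG.1, fun c hc => h c (hG.2 c hc)⟩

theorem holdsGenerically_forall_ne_zero [Finite σ] :
    HoldsGenerically fun c : σ → K => ∀ i, c i ≠ 0 := by
  classical
  have := Fintype.ofFinite σ
  refine ⟨∏ i, MvPolynomial.X i, Finset.prod_ne_zero_iff.2 fun i _ => MvPolynomial.X_ne_zero i,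
    fun c hc i => ?_⟩
  simp only [map_prod, MvPolynomial.eval_X, Finset.prod_ne_zero_iff] at hc
  exact hc i (Finset.mem_univ i)

theorem exists_eval_ne_zero [Infinite K] {G : MvPolynomial σ K} (hG : G ≠ 0) :
    ∃ c, MvPolynomial.eval c G ≠ 0 := by
  contrapose! hG
  exact MvPolynomial.funext fun c => by rw [hG c, map_zero]

theorem aeval_mul_pow_ne_zero {F : Type*} [Field F] [Algebra K F] {G : MvPolynomial σ K}
    {c : σ → K} (hc : MvPolynomial.eval c G ≠ 0) {t : F} (ht : Transcendental K t) (e : σ → ℕ) :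
    MvPolynomial.aeval (fun i => algebraMap K F (c i) * t ^ e i) G ≠ 0 := by
  set H : K[X] := MvPolynomial.aeval (fun i => C (c i) * X ^ e i) G with hH
  have hHt : aeval t H = MvPolynomial.aeval (fun i => algebraMap K F (c i) * t ^ e i) G := by
    simp [hH, MvPolynomial.comp_aeval_apply]
  have hH₁ : eval 1 H = MvPolynomial.eval c G := by
    simp [hH, ← coe_aeval_eq_eval, MvPolynomial.comp_aeval_apply, MvPolynomial.aeval_eq_eval]
  rw [← hHt]
  exact fun h => hc (by rw [← hH₁, transcendental_iff.1 ht H h, eval_zero])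

end Genericity

section GenericCoprimality

variable {R L : Type*} [CommRing R] [Field L] {f g : R[X]}

/-- Some nonzero constant lies in the ideal generated by `f` and `g`. Over a domain this says that
`f` and `g` are coprime over the fraction field. -/
def GenericallyCoprime (f g : R[X]) : Prop :=
  ∃ G : R, G ≠ 0 ∧ C G ∈ Ideal.span {f, g}

theorem isCoprime_map_of_C_mem_span {G : R} (h : C G ∈ Ideal.span {f, g}) {φ : R →+* L}
    (hG : φ G ≠ 0) : IsCoprime (f.map φ) (g.map φ) := by
  obtain ⟨p, q, hpq⟩ := Ideal.mem_span_pair.1 h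
  have hpq' : p.map φ * f.map φ + q.map φ * g.map φ = C (φ G) := by
    simpa using congrArg (Polynomial.map φ) hpq
  refine ⟨C (φ G)⁻¹ * p.map φ, C (φ G)⁻¹ * q.map φ, ?_⟩
  rw [mul_assoc, mul_assoc, ← mul_add, hpq', ← C_mul, inv_mul_cancel₀ hG, C_1]

theorem genericallyCoprime_of_isCoprime_map {φ : R →+* L} (hf : φ f.leadingCoeff ≠ 0)
    (h : IsCoprime (f.map φ) (g.map φ)) : GenericallyCoprime f g := by
  refine ⟨resultant f g f.natDegree (g.natDegree + 1), fun h0 => ?_, ?_⟩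
  · obtain ⟨k, hk⟩ := Nat.exists_eq_add_of_le (natDegree_map_le (f := φ) (p := g))
    have hres : φ (resultant f g f.natDegree (g.natDegree + 1)) =
        φ f.leadingCoeff ^ (k + 1) * resultant (f.map φ) (g.map φ) := by
      rw [← resultant_map_map, hk, add_assoc, resultant_add_right_deg _ _ _ _ _ le_rfl,
        natDegree_map_of_leadingCoeff_ne_zero φ hf, coeff_map, coeff_natDegree]
    rw [h0, map_zero] at hres
    exact mul_ne_zero (pow_ne_zero _ hf) (resultant_ne_zero _ _ h) hres.symm
  · obtain ⟨p, q, -, -, hpq⟩ := exists_mul_add_mul_eq_C_resultant f g (m := f.natDegree)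
      (n := g.natDegree + 1) le_rfl (Nat.le_succ _) (.inr (Nat.succ_ne_zero _))
    exact Ideal.mem_span_pair.2 ⟨p, q, by rw [← hpq]; ring⟩

end GenericCoprimality

section BasePoints

variable {K σ : Type*} [Field K]

theorem eval_map_eval (f : (MvPolynomial σ K)[X]) (c : σ → K) (u : K) :
    (f.map (MvPolynomial.eval c)).eval u = MvPolynomial.eval c (f.eval (MvPolynomial.C u)) := by
  rw [← eval_map_apply, MvPolynomial.eval_C]

/-- `f` and `g`, seen as families of polynomials over the coefficient space `σ → K`, have no
common root that is shared by all their members. -/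
def BasePointFree (f g : (MvPolynomial σ K)[X]) : Prop :=
  ∀ u : K, f.eval (MvPolynomial.C u) ≠ 0 ∨ g.eval (MvPolynomial.C u) ≠ 0

/-- As `f` and `g` involve disjoint sets of indeterminates, one can first choose `f` nonzero at the
finitely many base points of `g` and then `g` nonzero at the roots of the chosen `f`. -/
theorem BasePointFree.exists_isCoprime_map_eval [IsAlgClosed K] {f g : (MvPolynomial σ K)[X]}
    (h : BasePointFree f g) (hf₀ : f ≠ 0) (hg₀ : g ≠ 0) {B : Set σ}
    (hf : DependsOn (fun c => f.map (MvPolynomial.eval c)) B)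
    (hg : DependsOn (fun c => g.map (MvPolynomial.eval c)) Bᶜ) :
    ∃ c, MvPolynomial.eval c f.leadingCoeff ≠ 0 ∧
      IsCoprime (f.map (MvPolynomial.eval c)) (g.map (MvPolynomial.eval c)) := by
  classical
  have hfin : {u | g.eval (MvPolynomial.C u) = 0}.Finite :=
    (finite_setOfPred_isRoot hg₀).preimage (MvPolynomial.C_injective σ K).injOn
  obtain ⟨c₁, hc₁⟩ := exists_eval_ne_zero (G := f.leadingCoeff *
    ∏ u ∈ hfin.toFinset, f.eval (MvPolynomial.C u)) <| mul_ne_zero (leadingCoeff_ne_zero.2 hf₀) <|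
      Finset.prod_ne_zero_iff.2 fun u hu => (h u).resolve_right (not_not.2 (by simpa using hu))
  simp only [map_mul, map_prod, mul_ne_zero_iff, Finset.prod_ne_zero_iff, Set.Finite.mem_toFinset,
    ← eval_map_eval] at hc₁
  obtain ⟨hlc, hbase⟩ := hc₁
  have hf₁ : f.map (MvPolynomial.eval c₁) ≠ 0 := fun h0 => hlc (by
    simpa using congrArg (coeff · f.natDegree) h0)
  obtain ⟨c₂, hc₂⟩ := exists_eval_ne_zero (G := ∏ u ∈ (f.map (MvPolynomial.eval c₁)).roots.toFinset,
    g.eval (MvPolynomial.C u)) <| Finset.prod_ne_zero_iff.2 fun u hu hu' =>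
      hbase u hu' (isRoot_of_mem_roots (Multiset.mem_toFinset.1 hu))
  simp only [map_prod, Finset.prod_ne_zero_iff, Multiset.mem_toFinset, mem_roots hf₁,
    ← eval_map_eval] at hc₂
  have hfB : f.map (MvPolynomial.eval (B.piecewise c₁ c₂)) = f.map (MvPolynomial.eval c₁) :=
    hf fun i hi => Set.piecewise_eq_of_mem _ _ _ hi
  have hgB : g.map (MvPolynomial.eval (B.piecewise c₁ c₂)) = g.map (MvPolynomial.eval c₂) :=
    hg fun i hi => Set.piecewise_eq_of_notMem _ _ _ hi
  refine ⟨B.piecewise c₁ c₂, ?_, ?_⟩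
  · have := congrArg (coeff · f.natDegree) hfB
    simp only [coeff_map, coeff_natDegree] at this
    rwa [this]
  · rw [hfB, hgB, isCoprime_iff_aeval_ne_zero_of_isAlgClosed K K]
    simp only [coe_aeval_eq_eval]
    exact fun u => or_iff_not_imp_left.2 fun hu => hc₂ u (not_not.1 hu)

theorem BasePointFree.genericallyCoprime [IsAlgClosed K] {f g : (MvPolynomial σ K)[X]}
    (h : BasePointFree f g) (hf₀ : f ≠ 0) (hg₀ : g ≠ 0) {B : Set σ}
    (hf : DependsOn (fun c => f.map (MvPolynomial.eval c)) B)
    (hg : DependsOn (fun c => g.map (MvPolynomial.eval c)) Bᶜ) : GenericallyCoprime f g := by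
  obtain ⟨c, hc, hco⟩ := h.exists_isCoprime_map_eval hf₀ hg₀ hf hg
  exact genericallyCoprime_of_isCoprime_map hc hco

end BasePoints

section Secant

variable {R S : Type*} [CommRing R] [CommRing S]

/-- The divided difference `(P(1) * Q - P * Q(1)) / (X - 1)`. Away from `1`, its roots `u` are the
solutions of `P(u) / Q(u) = P(1) / Q(1)`. -/
noncomputable def secant (P Q : R[X]) : R[X] :=
  (C (P.eval 1) * Q - P * C (Q.eval 1)) /ₘ (X - C 1)

theorem map_secant (φ : R →+* S) (P Q : R[X]) :
    (secant P Q).map φ = secant (P.map φ) (Q.map φ) := by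
  rw [secant, map_divByMonic φ (monic_X_sub_C 1)]
  simp [secant]

theorem sub_one_mul_secant (P Q : R[X]) :
    (X - C 1) * secant P Q = C (P.eval 1) * Q - P * C (Q.eval 1) :=
  mul_divByMonic_eq_iff_isRoot.2 (by simp)

theorem eval_secant_eq_zero [IsDomain R] {P Q : R[X]} {u : R} (hu : u ≠ 1)
    (h : P.eval 1 * Q.eval u = P.eval u * Q.eval 1) : (secant P Q).eval u = 0 := by
  have := congrArg (eval u) (sub_one_mul_secant P Q)
  simp only [eval_sub, eval_mul, eval_X, eval_C, h, sub_self, mul_eq_zero] at this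
  exact this.resolve_left (sub_ne_zero.2 hu)

theorem eval_secant_X_pow [IsDomain R] (p q : ℕ) (u : R) : (secant (X ^ p) (X ^ q)).eval u =
    ∑ k ∈ Finset.range q, u ^ k - ∑ k ∈ Finset.range p, u ^ k := by
  have h : secant (X ^ p : R[X]) (X ^ q) =
      ∑ k ∈ Finset.range q, X ^ k - ∑ k ∈ Finset.range p, X ^ k := by
    refine mul_left_cancel₀ (X_sub_C_ne_zero 1) ?_
    rw [sub_one_mul_secant, C_1, mul_sub, mul_geom_sum, mul_geom_sum]
    simp
  simp [h, eval_finsetSum]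

end Secant

section GeomSum

theorem geom_sum_eq_zero_of_eq {R : Type*} [Semiring R] {A B : Finset ℕ} (hA : A.Nonempty)
    (hB : B.Nonempty) (h0 : 0 ∈ A ∪ B) {u : R}
    (h : ∀ p ∈ A, ∀ q ∈ B, ∑ k ∈ Finset.range p, u ^ k = ∑ k ∈ Finset.range q, u ^ k) :
    ∀ e ∈ A ∪ B, ∑ k ∈ Finset.range e, u ^ k = 0 := by
  obtain ⟨p₀, hp₀⟩ := hA
  obtain ⟨q₀, hq₀⟩ := hB
  have hzero : ∑ k ∈ Finset.range 0, u ^ k = 0 := Finset.sum_range_zero _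
  grind

/-- Otherwise the order of `u` divides every element of `T`, so `u = 1` and the sums are `e`. -/
theorem exists_geom_sum_ne_zero {R : Type*} [CommRing R] [CharZero R] {T : Finset ℕ}
    (hT : (T.filter (· ≠ 0)).gcd id = 1) (u : R) :
    ∃ e ∈ T, ∑ k ∈ Finset.range e, u ^ k ≠ 0 := by
  by_contra! h
  have hu : u = 1 := by
    rw [← orderOf_eq_one_iff, ← Nat.dvd_one, ← hT]
    refine Finset.dvd_gcd fun e he => orderOf_dvd_of_pow_eq_one (sub_eq_zero.1 ?_)
    rw [id, ← geom_sum_mul, h e (Finset.mem_filter.1 he).1, zero_mul]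
  have hT₀ : T.filter (· ≠ 0) = ∅ := Finset.filter_eq_empty_iff.2 fun e he =>
    not_not.2 (by simpa [hu] using h e he)
  simp [hT₀] at hT

end GeomSum

section SparsePolynomials

variable {R : Type*} [CommSemiring R]

/-- The polynomial with support in `S` and coefficient vector `c`: `polyOfCoeffs` over an arbitrary
coefficient ring. -/
noncomputable def sparsePoly (S : Finset ℕ) (c : {s // s ∈ S} → R) : R[X] :=
  ∑ s ∈ S.attach, C (c s) * X ^ (s : ℕ)

theorem map_sparsePoly {T : Type*} [CommSemiring T] (φ : R →+* T) (S : Finset ℕ)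
    (c : {s // s ∈ S} → R) : (sparsePoly S c).map φ = sparsePoly S fun s => φ (c s) := by
  simp [sparsePoly, Polynomial.map_sum]

theorem sparsePoly_single {S : Finset ℕ} (s : {s // s ∈ S}) :
    sparsePoly S (Pi.single s (1 : R)) = X ^ (s : ℕ) := by
  rw [sparsePoly, Finset.sum_eq_single s] <;> simp +contextual

theorem coeff_sparsePoly (S : Finset ℕ) (c : {s // s ∈ S} → R) (n : ℕ) :
    (sparsePoly S c).coeff n = if h : n ∈ S then c ⟨n, h⟩ else 0 := by
  rw [sparsePoly, finsetSum_coeff]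
  split_ifs with h
  · rw [Finset.sum_eq_single ⟨n, h⟩] <;> simp +contextual [coeff_X_pow, Subtype.ext_iff, eq_comm]
  · exact Finset.sum_eq_zero fun s _ => by
      simp [coeff_X_pow, show n ≠ s from fun hn => h (hn ▸ s.2)]

section Support

variable {S : Finset ℕ} {c : {s // s ∈ S} → R} (hc : ∀ s, c s ≠ 0)
include hc

theorem support_sparsePoly : (sparsePoly S c).support = S := by
  ext n
  simp [coeff_sparsePoly, hc]

theorem sparsePoly_ne_zero (hS : S.Nonempty) : sparsePoly S c ≠ 0 := by
  rwa [← support_nonempty, support_sparsePoly hc]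

theorem natDegree_sparsePoly (hS : S.Nonempty) : (sparsePoly S c).natDegree = S.max' hS := by
  simp only [natDegree_eq_support_max' (sparsePoly_ne_zero hc hS), support_sparsePoly hc]

theorem natTrailingDegree_sparsePoly (hS : S.Nonempty) :
    (sparsePoly S c).natTrailingDegree = S.min' hS := by
  simp only [natTrailingDegree_eq_support_min' (sparsePoly_ne_zero hc hS), support_sparsePoly hc]

end Support

theorem aeval_sparsePoly_mul {F : Type*} [CommSemiring F] [Algebra R F] (S : Finset ℕ)
    (c : {s // s ∈ S} → R) (t u : F) :
    (sparsePoly S fun s => algebraMap R F (c s) * t ^ (s : ℕ)).eval u =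
      aeval (t * u) (sparsePoly S c) := by
  simp [sparsePoly, eval_finsetSum, mul_pow, mul_assoc]

end SparsePolynomials

section GenericPolynomials

variable {ι K : Type*} [Field K] {SS : ι → Finset ℕ} {i j k l : ι}

variable (K SS i) in
/-- The polynomial with support `SS i` whose coefficients are indeterminates. -/
noncomputable def genericPoly : (MvPolynomial (Σ i, {s // s ∈ SS i}) K)[X] :=
  sparsePoly (SS i) fun s => MvPolynomial.X ⟨i, s⟩

theorem map_eval_genericPoly (c : (Σ i, {s // s ∈ SS i}) → K) :
    (genericPoly K SS i).map (MvPolynomial.eval c) = sparsePoly (SS i) fun s => c ⟨i, s⟩ := by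
  simp [genericPoly, map_sparsePoly]

theorem dependsOn_map_eval_genericPoly {B : Set (Σ i, {s // s ∈ SS i})}
    (hB : ∀ s, ⟨i, s⟩ ∈ B) :
    DependsOn (fun c => (genericPoly K SS i).map (MvPolynomial.eval c)) B := fun c d hcd => by
  simp only [map_eval_genericPoly, hcd _ (hB _)]

theorem genericPoly_ne_zero (h : (SS i).Nonempty) : genericPoly K SS i ≠ 0 :=
  sparsePoly_ne_zero (fun _ => MvPolynomial.X_ne_zero _) h

theorem exists_map_eval_genericPoly (hij : i ≠ j) {p q : ℕ} (hp : p ∈ SS i) (hq : q ∈ SS j) :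
    ∃ c : (Σ i, {s // s ∈ SS i}) → K, (genericPoly K SS i).map (MvPolynomial.eval c) = X ^ p ∧
      (genericPoly K SS j).map (MvPolynomial.eval c) = X ^ q := by
  classical
  refine ⟨fun x => if x = ⟨i, p, hp⟩ ∨ x = ⟨j, q, hq⟩ then 1 else 0, ?_, ?_⟩
  · rw [map_eval_genericPoly, ← sparsePoly_single ⟨p, hp⟩]
    congr 1
    ext s
    simp [Pi.single_apply, hij]
  · rw [map_eval_genericPoly, ← sparsePoly_single ⟨q, hq⟩]
    congr 1
    ext s
    simp [Pi.single_apply, hij.symm]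

theorem eval_map_eval_eq_zero {σ : Type*} {f : (MvPolynomial σ K)[X]} {u : K}
    (h : f.eval (MvPolynomial.C u) = 0) (c : σ → K) :
    (f.map (MvPolynomial.eval c)).eval u = 0 := by
  rw [eval_map_eval, h, map_zero]

theorem geom_sum_eq_zero_of_eval_secant_eq_zero (hi : (SS i).Nonempty) (hj : (SS j).Nonempty)
    (hij : i ≠ j) (h0 : 0 ∈ SS i ∪ SS j) {u : K}
    (hu : (secant (genericPoly K SS i) (genericPoly K SS j)).eval (MvPolynomial.C u) = 0) :
    ∀ e ∈ SS i ∪ SS j, ∑ k ∈ Finset.range e, u ^ k = 0 := by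
  refine geom_sum_eq_zero_of_eq hi hj h0 fun p hp q hq => ?_
  obtain ⟨c, hci, hcj⟩ := exists_map_eval_genericPoly (K := K) hij hp hq
  have := eval_map_eval_eq_zero hu c
  rw [map_secant, hci, hcj, eval_secant_X_pow, sub_eq_zero] at this
  exact this.symm

theorem secant_genericPoly_ne_zero (hi : (SS i).Nonempty) (hj : (SS j).Nonempty)
    (hij : i ≠ j) (h0 : 0 ∈ SS i ∪ SS j) (he : ∃ e ∈ SS i ∪ SS j, e ≠ 0) :
    secant (genericPoly K SS i) (genericPoly K SS j) ≠ 0 := by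
  obtain ⟨e, he, he₀⟩ := he
  intro h
  have := geom_sum_eq_zero_of_eval_secant_eq_zero (K := K) (u := 0) hi hj hij h0
    (by rw [h, eval_zero]) e he
  simp [zero_geom_sum, he₀] at this

theorem dependsOn_map_eval_secant {B : Set (Σ i, {s // s ∈ SS i})} (hi : ∀ s, ⟨i, s⟩ ∈ B)
    (hj : ∀ s, ⟨j, s⟩ ∈ B) : DependsOn (fun c =>
      (secant (genericPoly K SS i) (genericPoly K SS j)).map (MvPolynomial.eval c)) B := by
  intro c d hcd
  simp only [map_secant]
  exact congrArg₂ secant (dependsOn_map_eval_genericPoly hi hcd)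
    (dependsOn_map_eval_genericPoly hj hcd)

variable [IsAlgClosed K]

theorem genericallyCoprime_genericPoly (hi : (SS i).Nonempty) (hj : (SS j).Nonempty) (hij : i ≠ j)
    (h0 : 0 ∈ SS i ∪ SS j) : GenericallyCoprime (genericPoly K SS i) (genericPoly K SS j) := by
  refine BasePointFree.genericallyCoprime (B := {x | x.1 = i}) (fun u => ?_)
    (genericPoly_ne_zero hi) (genericPoly_ne_zero hj)
    (dependsOn_map_eval_genericPoly fun _ => rfl) (dependsOn_map_eval_genericPoly fun _ => hij.symm)
  by_contra! hu
  rcases Finset.mem_union.1 h0 with h0 | h0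
  · obtain ⟨c, hc, -⟩ := exists_map_eval_genericPoly (K := K) hij h0 hj.choose_spec
    simpa [hc] using eval_map_eval_eq_zero hu.1 c
  · obtain ⟨c, -, hc⟩ := exists_map_eval_genericPoly (K := K) hij hi.choose_spec h0
    simpa [hc] using eval_map_eval_eq_zero hu.2 c

theorem genericallyCoprime_genericPoly_divByMonic (hij : i ≠ j) {p q : ℕ} (hp : p ∈ SS i)
    (hq : q ∈ SS j) :
    GenericallyCoprime (genericPoly K SS i /ₘ X ^ p) (genericPoly K SS j /ₘ X ^ q) := by
  obtain ⟨c, hci, hcj⟩ := exists_map_eval_genericPoly (K := K) hij hp hq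
  have hmap (k : ι) (n : ℕ) (c : (Σ i, {s // s ∈ SS i}) → K) :
      (genericPoly K SS k /ₘ X ^ n).map (MvPolynomial.eval c) =
        (genericPoly K SS k).map (MvPolynomial.eval c) /ₘ X ^ n := by
    rw [map_divByMonic _ (monic_X_pow n), Polynomial.map_pow, map_X]
  have hone (n : ℕ) : (X ^ n : K[X]) /ₘ X ^ n = 1 := by
    simpa using mul_divByMonic_cancel_left 1 (monic_X_pow (R := K) n)
  have hi : (genericPoly K SS i /ₘ X ^ p).map (MvPolynomial.eval c) = 1 := by rw [hmap, hci, hone]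
  have hj : (genericPoly K SS j /ₘ X ^ q).map (MvPolynomial.eval c) = 1 := by rw [hmap, hcj, hone]
  refine BasePointFree.genericallyCoprime (B := {x | x.1 = i})
    (fun u => .inl fun h => by simpa [hi] using eval_map_eval_eq_zero h c)
    (fun h => by simp [h] at hi) (fun h => by simp [h] at hj)
    (fun c d hcd => ?_) (fun c d hcd => ?_) <;> simp only [hmap]
  · exact congrArg (· /ₘ X ^ p) (dependsOn_map_eval_genericPoly (fun _ => rfl) hcd)
  · exact congrArg (· /ₘ X ^ q) (dependsOn_map_eval_genericPoly (fun _ => hij.symm) hcd)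

theorem genericallyCoprime_secant [CharZero K] (hne : ∀ i, (SS i).Nonempty)
    (hnodup : [i, j, k, l].Nodup) (h0ij : 0 ∈ SS i ∪ SS j) (h0kl : 0 ∈ SS k ∪ SS l)
    (hgcd : ((SS i ∪ SS j ∪ SS k ∪ SS l).filter (· ≠ 0)).gcd id = 1)
    (hij₀ : ∃ e ∈ SS i ∪ SS j, e ≠ 0) (hkl₀ : ∃ e ∈ SS k ∪ SS l, e ≠ 0) :
    GenericallyCoprime (secant (genericPoly K SS i) (genericPoly K SS j))
      (secant (genericPoly K SS k) (genericPoly K SS l)) := by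
  have hij : i ≠ j := by grind
  have hkl : k ≠ l := by grind
  refine BasePointFree.genericallyCoprime (B := {x | x.1 = i ∨ x.1 = j}) (fun u => ?_)
    (secant_genericPoly_ne_zero (hne i) (hne j) hij h0ij hij₀)
    (secant_genericPoly_ne_zero (hne k) (hne l) hkl h0kl hkl₀)
    (dependsOn_map_eval_secant (fun _ => .inl rfl) fun _ => .inr rfl)
    (dependsOn_map_eval_secant (fun _ => ?_) fun _ => ?_)
  · by_contra! hu
    have hsumij := geom_sum_eq_zero_of_eval_secant_eq_zero (hne i) (hne j) hij h0ij hu.1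
    have hsumkl := geom_sum_eq_zero_of_eval_secant_eq_zero (hne k) (hne l) hkl h0kl hu.2
    obtain ⟨e, he, hne⟩ := exists_geom_sum_ne_zero hgcd u
    rw [Finset.union_assoc (SS i ∪ SS j), Finset.mem_union] at he
    exact hne (he.elim (hsumij e) (hsumkl e))
  all_goals
    simp only [Set.mem_compl_iff, Set.mem_ofPred_eq]
    grind

end GenericPolynomials

section GenericParam

variable {K F : Type*} [Field K] [Field F] [Algebra K F]

theorem injOn_of_C_mem_span_secant {ι : Type*} {SS : ι → Finset ℕ} {i j k l : ι}
    {G : MvPolynomial (Σ i, {s // s ∈ SS i}) K}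
    (hG : C G ∈ Ideal.span {secant (genericPoly K SS i) (genericPoly K SS j),
      secant (genericPoly K SS k) (genericPoly K SS l)})
    {c : (Σ i, {s // s ∈ SS i}) → K} (hc : MvPolynomial.eval c G ≠ 0) {P : ι → K[X]}
    (hP : ∀ i, P i = sparsePoly (SS i) fun s => c ⟨i, s⟩) (hP₀ : ∀ i, P i ≠ 0) :
    Set.InjOn (fun t : F => (aeval t (P i) / aeval t (P j), aeval t (P k) / aeval t (P l)))
      {t | Transcendental K t} := by
  intro t ht u hu heq
  simp only [Prod.mk.injEq] at heq
  have hne {t : F} (ht : Transcendental K t) (i : ι) : aeval t (P i) ≠ 0 := fun h =>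
    hP₀ i (transcendental_iff.1 ht _ h)
  have ht₀ := ne_zero_of_transcendental ht
  by_contra htu
  let φ : MvPolynomial (Σ i, {s // s ∈ SS i}) K →+* F :=
    (MvPolynomial.aeval fun x => algebraMap K F (c x) * t ^ (x.2 : ℕ)).toRingHom
  have hφ (i : ι) (u : F) : ((genericPoly K SS i).map φ).eval u = aeval (t * u) (P i) := by
    rw [hP, ← aeval_sparsePoly_mul]
    simp [genericPoly, map_sparsePoly, φ]
  have hroot {i j : ι} (h : aeval t (P i) / aeval t (P j) = aeval u (P i) / aeval u (P j)) :
      aeval (u / t) ((secant (genericPoly K SS i) (genericPoly K SS j)).map φ) = 0 := by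
    rw [coe_aeval_eq_eval, map_secant]
    refine eval_secant_eq_zero (fun h1 => htu ((div_eq_one_iff_eq ht₀).1 h1).symm) ?_
    simp only [hφ, mul_one, mul_div_cancel₀ u ht₀]
    exact (div_eq_div_iff (hne ht j) (hne hu j)).1 h
  have hco := isCoprime_map_of_C_mem_span hG (φ := φ)
    (aeval_mul_pow_ne_zero hc ht fun x => (x.2 : ℕ))
  rcases aeval_ne_zero_of_isCoprime hco (u / t) with h | h
  · exact h (hroot heq.1)
  · exact h (hroot heq.2)

theorem exists_X_pow_mem_span_of_isCoprime_divByMonic {R : Type*} [CommRing R] {P Q : R[X]}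
    {p q : ℕ} (hp : X ^ p ∣ P) (hq : X ^ q ∣ Q) (h : IsCoprime (P /ₘ X ^ p) (Q /ₘ X ^ q)) :
    ∃ k, X ^ k ∈ Ideal.span {P, Q} := by
  obtain ⟨P, rfl⟩ := hp
  obtain ⟨Q, rfl⟩ := hq
  rw [mul_divByMonic_cancel_left _ (monic_X_pow p), mul_divByMonic_cancel_left _ (monic_X_pow q)]
    at h
  obtain ⟨u, v, huv⟩ := h
  refine ⟨p + q, Ideal.mem_span_pair.2 ⟨u * X ^ q, v * X ^ p, ?_⟩⟩
  rw [pow_add, ← mul_one (X ^ p * X ^ q), ← huv]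
  ring

variable (F) in
theorem holdsGenerically_isGenericParam [IsAlgClosed K] [CharZero K] {SS : Fin 4 → Finset ℕ}
    (hne : ∀ i, (SS i).Nonempty) (h00 : 0 ∈ SS 0 ∪ SS 1) (h01 : 0 ∈ SS 2 ∪ SS 3)
    (hgcd : ((SS 0 ∪ SS 1 ∪ SS 2 ∪ SS 3).filter (· ≠ 0)).gcd id = 1)
    (h₀ : ∃ e ∈ SS 0 ∪ SS 1, e ≠ 0) (h₁ : ∃ e ∈ SS 2 ∪ SS 3, e ≠ 0) :
    HoldsGenerically fun c : (Σ i, {s // s ∈ SS i}) → K => (∀ x, c x ≠ 0) ∧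
      IsGenericParam F (sparsePoly (SS 0) fun s => c ⟨0, s⟩) (sparsePoly (SS 1) fun s => c ⟨1, s⟩)
        (sparsePoly (SS 2) fun s => c ⟨2, s⟩) (sparsePoly (SS 3) fun s => c ⟨3, s⟩) := by
  obtain ⟨G₀, hG₀, hco₀⟩ :=
    genericallyCoprime_genericPoly (K := K) (hne 0) (hne 1) (by decide) h00
  obtain ⟨G₁, hG₁, hco₁⟩ :=
    genericallyCoprime_genericPoly (K := K) (hne 2) (hne 3) (by decide) h01
  obtain ⟨G₂, hG₂, hco₂⟩ := genericallyCoprime_genericPoly_divByMonic (K := K) (SS := SS)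
    (i := 0) (j := 2) (by decide) ((SS 0).min'_mem (hne 0)) ((SS 2).min'_mem (hne 2))
  obtain ⟨G₃, hG₃, hco₃⟩ :=
    genericallyCoprime_secant (K := K) hne (by decide) h00 h01 hgcd h₀ h₁
  refine (holdsGenerically_forall_ne_zero.and ⟨G₀ * G₁ * G₂ * G₃, by simp [*], fun c hc => hc⟩).mono
    fun c ⟨hc, hG⟩ => ⟨hc, ?_⟩
  simp only [map_mul, mul_ne_zero_iff] at hG
  obtain ⟨⟨⟨hG₀, hG₁⟩, hG₂⟩, hG₃⟩ := hG
  have hc' (i : Fin 4) (s : {s // s ∈ SS i}) : c ⟨i, s⟩ ≠ 0 := hc _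
  refine ⟨?_, ?_, ?_, ?_⟩
  · simpa only [map_eval_genericPoly] using isCoprime_map_of_C_mem_span hco₀ hG₀
  · simpa only [map_eval_genericPoly] using isCoprime_map_of_C_mem_span hco₁ hG₁
  · have hdvd (i : Fin 4) : X ^ (SS i).min' (hne i) ∣ sparsePoly (SS i) fun s => c ⟨i, s⟩ := by
      rw [← natTrailingDegree_sparsePoly (hc' i)]
      exact X_pow_dvd_iff.2 fun d hd => coeff_eq_zero_of_lt_natTrailingDegree hd
    refine exists_X_pow_mem_span_of_isCoprime_divByMonic (hdvd 0) (hdvd 2) ?_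
    simpa only [map_eval_genericPoly, map_divByMonic _ (monic_X_pow _), Polynomial.map_pow, map_X]
      using isCoprime_map_of_C_mem_span hco₂ hG₂
  · exact injOn_of_C_mem_span_secant hco₃ hG₃ (fun _ => rfl)
      fun i => sparsePoly_ne_zero (hc' i) (hne i)

end GenericParam

section Supports

variable {A B : Finset ℕ} (hA : A.Nonempty)
include hA

theorem zero_mem_sdiff_iff (h : 0 ∈ A ∪ B) : 0 ∈ B \ A ↔ A.min' hA ≠ 0 := by
  have := A.min'_mem hA
  have : 0 ∈ A → A.min' hA ≤ 0 := A.min'_le 0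
  grind

theorem max_mem_sdiff_iff {n : ℕ} (hn : n ∈ A ∪ B) (hmax : ∀ s ∈ A ∪ B, s ≤ n) :
    n ∈ B \ A ↔ n - A.max' hA ≠ 0 := by
  have := A.max'_mem hA
  have := hmax _ (Finset.mem_union_left B this)
  have : n ∈ A → n ≤ A.max' hA := A.le_max' n
  grind

theorem max_natDegree_sparsePoly {R : Type*} [CommSemiring R] {a : {s // s ∈ A} → R}
    {b : {s // s ∈ B} → R} (ha : ∀ s, a s ≠ 0) (hb : ∀ s, b s ≠ 0) (hB : B.Nonempty) {n : ℕ}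
    (hn : n ∈ A ∪ B) (hmax : ∀ s ∈ A ∪ B, s ≤ n) :
    max (sparsePoly A a).natDegree (sparsePoly B b).natDegree = n := by
  rw [natDegree_sparsePoly ha hA, natDegree_sparsePoly hb hB, ← Finset.max'_union hA hB]
  exact le_antisymm (Finset.max'_le _ _ _ hmax) (Finset.le_max' _ _ hn)

theorem ordInfty_sparsePoly {R : Type*} [CommSemiring R] {a : {s // s ∈ A} → R}
    {b : {s // s ∈ B} → R} (ha : ∀ s, a s ≠ 0) (hb : ∀ s, b s ≠ 0) (hB : B.Nonempty) {n : ℕ}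
    (hn : n ∈ A ∪ B) (hmax : ∀ s ∈ A ∪ B, s ≤ n) :
    ordInfty (sparsePoly A a) (sparsePoly B b) = n - A.max' hA := by
  rw [ordInfty, max_natDegree_sparsePoly hA ha hb hB hn hmax, natDegree_sparsePoly ha hA]

end Supports

section Specialization

variable {SS : Fin 4 → Finset ℕ} {c : (Σ i : Fin 4, {s // s ∈ SS i}) → ℂ}
  {φ : MvPolynomial (Fin 2) ℂ}

theorem lowerLeftCorner_exponents_of_vanishesDiff (hne : ∀ i, (SS i).Nonempty)
    (hc : ∀ x, c x ≠ 0)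
    (h : IsGenericParam (AlgebraicClosure (RatFunc ℂ))
      (sparsePoly (SS 0) fun s => c ⟨0, s⟩) (sparsePoly (SS 1) fun s => c ⟨1, s⟩)
      (sparsePoly (SS 2) fun s => c ⟨2, s⟩) (sparsePoly (SS 3) fun s => c ⟨3, s⟩))
    {n₀ n₁ : ℕ} (hn₀ : n₀ ∈ SS 0 ∪ SS 1) (hmax₀ : ∀ s ∈ SS 0 ∪ SS 1, s ≤ n₀)
    (hn₁ : n₁ ∈ SS 2 ∪ SS 3) (hmax₁ : ∀ s ∈ SS 2 ∪ SS 3, s ≤ n₁) (h₀ : n₀ ≠ 0)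
    (hirr : Irreducible φ) (hφ : vanishesDiff SS c φ) {a b a' b' : ℕ}
    (ha : a = (SS 0).min' (hne 0)) (hb : b = (SS 2).min' (hne 2))
    (ha' : a' = n₀ - (SS 0).max' (hne 0)) (hb' : b' = n₁ - (SS 2).max' (hne 2)) :
    LowerLeftCorner (exponents ((Bivariate.equivMvPolynomial ℂ).symm φ))
        (gated b a) (gated a b) (gated b' a') (gated a' b') ∨
      LowerLeftCorner (exponents ((Bivariate.equivMvPolynomial ℂ).symm φ))
        (gated b' a') (gated a' b') (gated b a) (gated a b) := by
  have hc' (i : Fin 4) (s : {s // s ∈ SS i}) : c ⟨i, s⟩ ≠ 0 := hc _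
  have hne' (i : Fin 4) := sparsePoly_ne_zero (hc' i) (hne i)
  have hd : max (sparsePoly (SS 0) fun s => c ⟨0, s⟩).natDegree
      (sparsePoly (SS 1) fun s => c ⟨1, s⟩).natDegree ≠ 0 := by
    rwa [max_natDegree_sparsePoly (hne 0) (hc' 0) (hc' 1) (hne 1) hn₀ hmax₀]
  rw [← natTrailingDegree_sparsePoly (hc' 0)] at ha
  rw [← natTrailingDegree_sparsePoly (hc' 2)] at hb
  rw [← ordInfty_sparsePoly (hne 0) (hc' 0) (hc' 1) (hne 1) hn₀ hmax₀] at ha'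
  rw [← ordInfty_sparsePoly (hne 2) (hc' 2) (hc' 3) (hne 3) hn₁ hmax₁] at hb'
  refine h.lowerLeftCorner_exponents (hne' 0) (hne' 1) (hne' 2) (hne' 3) hd
    ((MulEquiv.irreducible_iff _).2 hirr) ?_ (by rw [ha, hb]) (by rw [ha, hb])
    (by rw [ha', hb']) (by rw [ha', hb'])
  rw [← aeval_equivMvPolynomial, AlgEquiv.apply_symm_apply]
  exact hφ

end Specialization

/-- The lower left corner of the implicit Newton polygon (different denominators).
`SS 0, SS 1, SS 2, SS 3` are the supports of `P₀, Q₀, P₁, Q₁`. -/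
theorem implicit_lower_left_corner (SS : Fin 4 → Finset ℕ) (hne : ∀ i, (SS i).Nonempty)
    (h00 : 0 ∈ SS 0 ∪ SS 1) (h01 : 0 ∈ SS 2 ∪ SS 3)
    (hgcd : ((SS 0 ∪ SS 1 ∪ SS 2 ∪ SS 3).filter (fun s => s ≠ 0)).gcd id = 1)
    (a0n a1m : ℕ)
    (ha0nmem : a0n ∈ SS 0 ∪ SS 1) (ha0nmax : ∀ s ∈ SS 0 ∪ SS 1, s ≤ a0n)
    (ha1mmem : a1m ∈ SS 2 ∪ SS 3) (ha1mmax : ∀ s ∈ SS 2 ∪ SS 3, s ≤ a1m)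
    (ha0n1 : 1 ≤ a0n) (ha1m1 : 1 ≤ a1m)
    (hQ0 : ¬ SS 1 ⊆ SS 0) (hQ1 : ¬ SS 3 ⊆ SS 2)
    (E E' : ℕ) (δ : ℤ)
    (hE : E = (if 0 ∈ SS 3 \ SS 2 then (SS 0).min' (hne 0) else 0) +
      (if a1m ∈ SS 3 \ SS 2 then a0n - (SS 0).max' (hne 0) else 0))
    (hE' : E' = (if 0 ∈ SS 1 \ SS 0 then (SS 2).min' (hne 2) else 0) +
      (if a0n ∈ SS 1 \ SS 0 then a1m - (SS 2).max' (hne 2) else 0))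
    (hδ : δ = ((a0n : ℤ) - ((SS 0).max' (hne 0) : ℤ)) * ((SS 2).min' (hne 2) : ℤ) -
      ((SS 0).min' (hne 0) : ℤ) * ((a1m : ℤ) - ((SS 2).max' (hne 2) : ℤ)))
    (hEne : E ≠ 0) :
    (((0 ∈ SS 1 \ SS 0 ∧ 0 ∈ SS 3 \ SS 2) ∨
        (a0n ∈ SS 1 \ SS 0 ∧ a1m ∈ SS 3 \ SS 2)) ∧ E' ≠ 0) ∧
    ∃ G : MvPolynomial (Σ i : Fin 4, {s // s ∈ SS i}) ℂ, G ≠ 0 ∧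
      ∀ c : (Σ i : Fin 4, {s // s ∈ SS i}) → ℂ, MvPolynomial.eval c G ≠ 0 →
        ∀ φ : MvPolynomial (Fin 2) ℂ, Irreducible φ → vanishesDiff SS c φ →
          ((0 : ℝ), (E : ℝ)) ∈ Set.extremePoints ℝ (newtonPolygon φ) ∧
          ((E' : ℝ), (0 : ℝ)) ∈ Set.extremePoints ℝ (newtonPolygon φ) ∧
          (¬ ((0 ∈ SS 1 \ SS 0 ∧ 0 ∈ SS 3 \ SS 2 ∧
                a0n ∈ SS 1 \ SS 0 ∧ a1m ∈ SS 3 \ SS 2) ∧ δ ≠ 0) →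
            segment ℝ ((0 : ℝ), (E : ℝ)) ((E' : ℝ), (0 : ℝ)) ⊆ frontier (newtonPolygon φ)) ∧
          ((0 ∈ SS 1 \ SS 0 ∧ 0 ∈ SS 3 \ SS 2 ∧
                a0n ∈ SS 1 \ SS 0 ∧ a1m ∈ SS 3 \ SS 2) ∧ δ ≠ 0 →
            (if δ < 0 then
                ((((SS 2).min' (hne 2) : ℕ) : ℝ), ((a0n - (SS 0).max' (hne 0) : ℕ) : ℝ))
              else
                (((a1m - (SS 2).max' (hne 2) : ℕ) : ℝ), (((SS 0).min' (hne 0) : ℕ) : ℝ)))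
                ∈ Set.extremePoints ℝ (newtonPolygon φ) ∧
            segment ℝ ((0 : ℝ), (E : ℝ))
              (if δ < 0 then
                  ((((SS 2).min' (hne 2) : ℕ) : ℝ), ((a0n - (SS 0).max' (hne 0) : ℕ) : ℝ))
                else
                  (((a1m - (SS 2).max' (hne 2) : ℕ) : ℝ), (((SS 0).min' (hne 0) : ℕ) : ℝ)))
              ⊆ frontier (newtonPolygon φ) ∧
            segment ℝ
              (if δ < 0 then
                  ((((SS 2).min' (hne 2) : ℕ) : ℝ), ((a0n - (SS 0).max' (hne 0) : ℕ) : ℝ))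
                else
                  (((a1m - (SS 2).max' (hne 2) : ℕ) : ℝ), (((SS 0).min' (hne 0) : ℕ) : ℝ)))
              ((E' : ℝ), (0 : ℝ)) ⊆ frontier (newtonPolygon φ)) := by
  have hle₀ : (SS 0).max' (hne 0) ≤ a0n := ha0nmax _ (Finset.mem_union_left _ ((SS 0).max'_mem _))
  have hle₁ : (SS 2).max' (hne 2) ≤ a1m := ha1mmax _ (Finset.mem_union_left _ ((SS 2).max'_mem _))
  simp only [zero_mem_sdiff_iff (hne _) h00, zero_mem_sdiff_iff (hne _) h01,
    max_mem_sdiff_iff (hne _) ha0nmem ha0nmax,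
    max_mem_sdiff_iff (hne _) ha1mmem ha1mmax] at hE hE' ⊢
  rw [← Nat.cast_sub hle₀, ← Nat.cast_sub hle₁] at hδ
  change E = gated _ _ + gated _ _ at hE
  change E' = gated _ _ + gated _ _ at hE'
  subst hE hE'
  refine ⟨gated_add_gated_ne_zero hEne, ?_⟩
  refine (holdsGenerically_isGenericParam (AlgebraicClosure (RatFunc ℂ)) hne h00 h01 hgcd
    ⟨a0n, ha0nmem, by omega⟩ ⟨a1m, ha1mmem, by omega⟩).mono fun c ⟨hc, hgen⟩ φ hirr hφ => ?_
  rw [newtonPolygon_eq_latticeHull]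
  exact lowerLeft_boundary_gated (lowerLeftCorner_exponents_of_vanishesDiff hne hc hgen ha0nmem
    ha0nmax ha1mmem ha1mmax (by omega) hirr hφ rfl rfl rfl rfl) hEne hδ
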